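/- arXiv:0812.1370 — 6 statements merged into one kernel-verified Lean document; each statement's English description precedes it below -/
import Mathlib

section
/- Let β ∈ ℂ with β ∉ ℤ. Then the module M = ℂ[x]_x·x^β is a simple B-module: its only B-submodules are 0 and M. -/
set_option synthInstance.maxHeartbeats 1000000
set_option maxHeartbeats 1000000

/-!
The operator `X * D` is diagonal in the basis `e`, with eigenvalues `β + i` that are pairwise
distinct. Lagrange interpolation at these eigenvalues produces polynomials in `X * D` that project
a vector onto any one of its components, so a nonzero submodule contains some `e i`. From there `X`
climbs to all higher basis vectors and, as `β + i` never vanishes, `D` descends to all lower ones.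
-/

open Module

section Adjoin

variable {R M : Type*} [CommSemiring R] [AddCommMonoid M] [Module R M] {S : Set (End R M)}

theorem restrictScalars_mem_invtSubmodule_of_mem (N : Submodule (Algebra.adjoin R S) M)
    {f : End R M} (hf : f ∈ S) : N.restrictScalars R ∈ f.invtSubmodule :=
  fun _ hv ↦ N.smul_mem ⟨f, Algebra.subset_adjoin hf⟩ hv

theorem isSimpleOrder_submodule_adjoin [Nontrivial M]
    (h : ∀ p : Submodule R M, p ≠ ⊥ → (∀ f ∈ S, p ∈ f.invtSubmodule) → p = ⊤) :
    IsSimpleOrder (Submodule (Algebra.adjoin R S) M) where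
  eq_bot_or_eq_top N := or_iff_not_imp_left.mpr fun hN ↦
    (Submodule.restrictScalars_eq_top_iff R _ M).mp <|
      h (N.restrictScalars R) (mt (Submodule.restrictScalars_eq_bot_iff R _ M).mp hN)
        fun _ hf ↦ restrictScalars_mem_invtSubmodule_of_mem N hf

end Adjoin

section Diagonal

variable {ι K V : Type*} [Field K] [AddCommGroup V] [Module K V] (e : Basis ι K V)
  {c : ι → K} {f : End K V}

open Polynomial in
theorem aeval_lagrange_basis_apply_of_diagonal [DecidableEq ι] (hc : Function.Injective c)
    (hf : ∀ i, f (e i) = c i • e i) {v : V} {i : ι} (hi : i ∈ (e.repr v).support) :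
    aeval f (Lagrange.basis (e.repr v).support c i) v = e.repr v i • e i := by
  set s := (e.repr v).support
  set q := Lagrange.basis s c i
  have eval_q_of_ne : ∀ j ∈ s, j ≠ i → q.eval (c j) = 0 := fun j hj hji ↦
    Lagrange.eval_basis_of_ne hji.symm hj
  have eval_q_self : q.eval (c i) = 1 := Lagrange.eval_basis_self hc.injOn hi
  calc aeval f q v = aeval f q (∑ j ∈ s, e.repr v j • e j) :=
        congrArg (aeval f q) (e.linearCombination_repr v).symm
    _ = ∑ j ∈ s, e.repr v j • q.eval (c j) • e j := by
        simp only [map_sum, map_smul, End.aeval_apply_of_mem_apply_eq_smul (hf _)]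
    _ = e.repr v i • q.eval (c i) • e i :=
        Finset.sum_eq_single_of_mem i hi fun j hj hji ↦ by
          rw [eval_q_of_ne j hj hji, zero_smul, smul_zero]
    _ = e.repr v i • e i := by rw [eval_q_self, one_smul]

theorem basis_mem_of_diagonal_invariant (hc : Function.Injective c)
    (hf : ∀ i, f (e i) = c i • e i) {p : Submodule K V} (hp : p ∈ f.invtSubmodule)
    {v : V} (hv : v ∈ p) {i : ι} (hi : e.repr v i ≠ 0) : e i ∈ p := by
  classical
  rw [← p.smul_mem_iff hi,
    ← aeval_lagrange_basis_apply_of_diagonal e hc hf (Finsupp.mem_support_iff.mpr hi)]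
  exact Polynomial.aeval_apply_smul_mem_of_le_comap hv _ f hp

theorem exists_basis_mem_of_diagonal_invariant (hc : Function.Injective c)
    (hf : ∀ i, f (e i) = c i • e i) {p : Submodule K V} (hp : p ∈ f.invtSubmodule)
    (hp0 : p ≠ ⊥) : ∃ i, e i ∈ p := by
  obtain ⟨v, hv, hv0⟩ := p.ne_bot_iff.mp hp0
  obtain ⟨i, hi⟩ := Finsupp.ne_iff.mp (e.repr.map_ne_zero_iff.mpr hv0)
  exact ⟨i, basis_mem_of_diagonal_invariant e hc hf hp hv hi⟩

end Diagonal

theorem eq_top_of_basis_mem_of_shift_invariant {K V : Type*} [DivisionRing K] [AddCommGroup V]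
    [Module K V] (e : Basis ℤ K V) {c : ℤ → K} (hc0 : ∀ i, c i ≠ 0) {X D : End K V}
    (hX : ∀ i, X (e i) = e (i + 1)) (hD : ∀ i, D (e i) = c i • e (i - 1))
    {p : Submodule K V} (hpX : p ∈ X.invtSubmodule) (hpD : p ∈ D.invtSubmodule)
    {i : ℤ} (hi : e i ∈ p) : p = ⊤ := by
  refine (Submodule.eq_top_iff_forall_basis_mem e).mpr fun j ↦ ?_
  induction j using Int.inductionOn' (b := i) with
  | zero => exact hi
  | succ k _ hk => exact hX k ▸ hpX hk
  | pred k _ hk => exact (p.smul_mem_iff (hc0 k)).mp (hD k ▸ hpD hk)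

theorem stmt1_general {K V : Type*} [Field K] [AddCommGroup V] [Module K V] (e : Basis ℤ K V)
    {c : ℤ → K} (hc : Function.Injective c) (hc0 : ∀ i, c i ≠ 0) {X D : End K V}
    (hX : ∀ i, X (e i) = e (i + 1)) (hD : ∀ i, D (e i) = c i • e (i - 1)) :
    IsSimpleOrder (Submodule (Algebra.adjoin K {X, D}) V) := by
  have hXD (i : ℤ) : (X * D) (e i) = c i • e i := by
    rw [End.mul_apply, hD, map_smul, hX, sub_add_cancel]
  have : Nontrivial V := ⟨e 0, 0, e.ne_zero 0⟩
  refine isSimpleOrder_submodule_adjoin fun p hp0 hp ↦ ?_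
  have hpX : p ∈ X.invtSubmodule := hp X (Set.mem_insert X {D})
  have hpD : p ∈ D.invtSubmodule := hp D (Set.mem_insert_of_mem X rfl)
  obtain ⟨i, hi⟩ := exists_basis_mem_of_diagonal_invariant e hc hXD
    (End.invtSubmodule.comp X hpX hpD) hp0
  exact eq_top_of_basis_mem_of_shift_invariant e hc0 hX hD hpX hpD hi

/-- if `β ∈ ℂ` is not an integer, the module `M = ℂ[x]_x · x^β`
(realized as `ℤ →₀ ℂ` with basis `e_i ↔ x^{β+i}`, with operators `X e_i = e_{i+1}` and
`D e_i = (β+i) e_{i-1}`) is a simple module over the subalgebra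
`B = ℂ⟨X, D⟩ ⊆ End_ℂ(M)` (acting by application): the lattice of `B`-submodules of `M`
consists exactly of `0 = ⊥` and `M = ⊤`. -/
theorem stmt1 (β : ℂ) (hβ : ∀ n : ℤ, β ≠ n)
    (X D : Module.End ℂ (ℤ →₀ ℂ))
    (hX : ∀ i : ℤ, X (Finsupp.single i 1) = Finsupp.single (i + 1) 1)
    (hD : ∀ i : ℤ, D (Finsupp.single i 1) = (β + (i : ℂ)) • Finsupp.single (i - 1) 1) :
    IsSimpleOrder (Submodule (Algebra.adjoin ℂ {X, D}) (ℤ →₀ ℂ)) := by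
  have hc0 (i : ℤ) : β + i ≠ 0 := fun h ↦
    hβ (-i) (by simpa using eq_neg_of_add_eq_zero_left h)
  exact stmt1_general Finsupp.basisSingleOne ((add_right_injective β).comp Int.cast_injective)
    hc0 hX hD
end

section
/- Let M be a simple module over the Weyl algebra A_n. Then every A_n-linear endomorphism of M is multiplication by a complex scalar, i.e. End_{A_n}(M) = ℂ. -/
set_option synthInstance.maxHeartbeats 1000000
set_option maxHeartbeats 1000000

open MvPolynomial in
/-- The Weyl algebra `A_n`, realized as the ℂ-subalgebra of `End_ℂ(ℂ[x₁,…,xₙ])` generated by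
the multiplication operators by the variables and the formal partial derivatives. -/
noncomputable def WeylAlgebra (n : ℕ) : Subalgebra ℂ (Module.End ℂ (MvPolynomial (Fin n) ℂ)) :=
  Algebra.adjoin ℂ
    ((Set.range fun i : Fin n => LinearMap.mulLeft ℂ (X i)) ∪
      (Set.range fun i : Fin n =>
        ((pderiv i : Derivation ℂ (MvPolynomial (Fin n) ℂ) (MvPolynomial (Fin n) ℂ)) :
          MvPolynomial (Fin n) ℂ →ₗ[ℂ] MvPolynomial (Fin n) ℂ)))


/-!
By Schur's lemma `End_R(M)` is a division algebra, and it embeds into `M`, a quotient of `R`, by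
evaluation at a nonzero vector. If it contained a transcendental element `a`, the inverses
`(a - c)⁻¹`, `c ∈ K`, would be linearly independent, so `R` would have dimension at least `#K`
over `K`. When `dim_K R < #K` every endomorphism is therefore algebraic over `K`, hence scalar if
`K` is algebraically closed. The Weyl algebra is countably generated, so its dimension over the
uncountable field `ℂ` is countable.
-/

section DivisionAlgebra

variable (K : Type*) {D : Type*} [Field K] [DivisionRing D] [Algebra K D]

theorem isField_centralizer_centralizer {s : Set D} (hs : ∀ a ∈ s, ∀ b ∈ s, a * b = b * a) :
    IsField (Subalgebra.centralizer K s.centralizer) where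
  exists_pair_ne := exists_pair_ne _
  mul_comm a b := Subtype.ext (Set.centralizer_centralizer_comm_of_comm hs a a.2 b b.2)
  mul_inv_cancel {a} ha :=
    ⟨⟨(a : D)⁻¹, Set.inv_mem_centralizer₀ a.2⟩,
      Subtype.ext (mul_inv_cancel₀ (Subtype.coe_ne_coe.2 ha))⟩

variable {K}

-- The double centralizer of `a` is a field containing every `(a - c)⁻¹`.
theorem linearIndependent_sub_inv_of_transcendental {a : D} (ha : Transcendental K a) :
    LinearIndependent K fun c : K ↦ (a - algebraMap K D c)⁻¹ := by
  let B := Subalgebra.centralizer K (Set.centralizer {a})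
  have hB : IsField B := isField_centralizer_centralizer K (by simp)
  let _ : Field B := hB.toField
  let b : B := ⟨a, Set.subset_centralizer_centralizer rfl⟩
  have hb : Transcendental K b := fun h ↦ ha (h.algHom B.val)
  have hcoe (c : K) : B.val (b - algebraMap K B c)⁻¹ = (a - algebraMap K D c)⁻¹ :=
    map_inv₀ B.val.toRingHom (b - algebraMap K B c)
  simp_rw [← hcoe]
  exact hb.linearIndependent_sub_inv.map' B.val.toLinearMap
    (LinearMap.ker_eq_bot.2 Subtype.val_injective)

end DivisionAlgebra

universe u v w

open Cardinal

theorem isAlgebraic_of_lift_rank_lt_lift_card {K : Type u} {D : Type v} [Field K] [DivisionRing D]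
    [Algebra K D] (h : lift.{u} (Module.rank K D) < lift.{v} #K) : Algebra.IsAlgebraic K D := by
  refine ⟨fun a ↦ ?_⟩
  by_contra ha
  exact h.not_ge (linearIndependent_sub_inv_of_transcendental ha).cardinal_lift_le_rank

theorem lift_rank_end_le_of_span_singleton_eq_top {K : Type u} {R : Type v} {M : Type w}
    [CommRing K] [Ring R] [Algebra K R] [AddCommGroup M] [Module K M] [Module R M]
    [IsScalarTower K R M] {m : M} (hm : Submodule.span R {m} = ⊤) :
    lift.{v} (Module.rank K (Module.End R M)) ≤ lift.{w} (Module.rank K R) := by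
  have heval : Function.Injective (LinearMap.applyₗ' K m : Module.End R M →ₗ[K] M) :=
    fun φ ψ h ↦ LinearMap.ext_on hm (by simpa using h)
  have hspan : Function.Surjective (LinearMap.toSpanSingleton R M m) :=
    LinearMap.range_eq_top.1 ((LinearMap.span_singleton_eq_range R M m).symm.trans hm)
  exact (lift_le.2 (LinearMap.rank_le_of_injective _ heval)).trans
    (((LinearMap.toSpanSingleton R M m).restrictScalars K).lift_rank_le_of_surjective hspan)

section Dixmier

variable {K : Type u} {R : Type v} {M : Type w} [Field K] [IsAlgClosed K] [Ring R] [Algebra K R]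
  [AddCommGroup M] [Module R M] [IsSimpleModule R M]

theorem algebraMap_end_bijective_of_lift_rank_lt_lift_card [Module K M] [IsScalarTower K R M]
    (h : lift.{u} (Module.rank K R) < lift.{v} #K) :
    Function.Bijective (algebraMap K (Module.End R M)) := by
  classical
  have := IsSimpleModule.nontrivial R M
  obtain ⟨m, hm⟩ := exists_ne (0 : M)
  have hle := lift_rank_end_le_of_span_singleton_eq_top (K := K)
    (IsSimpleModule.span_singleton_eq_top R hm)
  have hlt : lift.{u} (Module.rank K (Module.End R M)) < lift.{w} #K := by
    rw [← lift_lt.{max u w, v}]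
    calc lift.{v} (lift.{u} (Module.rank K (Module.End R M)))
        ≤ lift.{w} (lift.{u} (Module.rank K R)) := by
          simpa only [lift_lift, lift_umax] using lift_le.{u}.2 hle
      _ < lift.{w} (lift.{v} #K) := lift_lt.2 h
      _ = lift.{v} (lift.{w} #K) := by simp only [lift_lift]
  have := isAlgebraic_of_lift_rank_lt_lift_card hlt
  exact IsAlgClosed.algebraMap_bijective_of_isIntegral

theorem stmt3_general (h : lift.{u} (Module.rank K R) < lift.{v} #K) (φ : M →ₗ[R] M) :
    ∃ c : K, ∀ x : M, φ x = algebraMap K R c • x := by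
  let _ : Module K M := Module.compHom M (algebraMap K R)
  have : IsScalarTower K R M := .of_algebraMap_smul fun _ _ ↦ rfl
  obtain ⟨c, rfl⟩ := (algebraMap_end_bijective_of_lift_rank_lt_lift_card h).surjective φ
  exact ⟨c, fun _ ↦ rfl⟩

end Dixmier

theorem rank_adjoin_le_aleph0 {K A : Type*} [CommRing K] [Ring A] [Algebra K A] {s : Set A}
    (hs : s.Countable) : Module.rank K (Algebra.adjoin K s) ≤ ℵ₀ :=
  (Algebra.rank_adjoin_le s).trans (max_le hs.le_aleph0 le_rfl)

theorem WeylAlgebra.rank_le_aleph0 (n : ℕ) : Module.rank ℂ (WeylAlgebra n) ≤ ℵ₀ :=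
  rank_adjoin_le_aleph0 ((Set.countable_range _).union (Set.countable_range _))

theorem WeylAlgebra.rank_lt_card_complex (n : ℕ) : Module.rank ℂ (WeylAlgebra n) < #ℂ :=
  (WeylAlgebra.rank_le_aleph0 n).trans_lt (mk_complex ▸ aleph0_lt_continuum)

/-- every `A_n`-linear endomorphism of a simple module `M` over the Weyl algebra
`A_n` is multiplication by a complex scalar, i.e. `End_{A_n}(M) = ℂ`. -/
theorem stmt3 (n : ℕ) (M : Type*) [AddCommGroup M] [Module (WeylAlgebra n) M]
    (hM : IsSimpleModule (WeylAlgebra n) M) (φ : M →ₗ[WeylAlgebra n] M) :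
    ∃ c : ℂ, ∀ x : M, φ x = algebraMap ℂ (WeylAlgebra n) c • x :=
  stmt3_general (K := ℂ) (R := WeylAlgebra n) (lift_lt.2 (WeylAlgebra.rank_lt_card_complex n)) φ
end

section
/- Let A and B be ℂ-algebras, M a simple A-module such that every A-linear endomorphism of M is multiplication by a complex scalar, and N a simple B-module. Then the external product M ⊗_ℂ N is a simple module over A ⊗_ℂ B. -/
set_option synthInstance.maxHeartbeats 1000000
set_option maxHeartbeats 1000000

open scoped TensorProduct

/-! Jacobson density lets `A` imitate any `k`-linear endomorphism `f` of `M` on finitely many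
vectors, hence imitate `f ⊗ id` on any single tensor `x`. If `x ≠ 0`, some functional `ξ` on `M`
contracts `x` to a nonzero `v : N`, and the rank-one maps `m ↦ ξ m • u` carry `x` to `u ⊗ v` for
every `u`. Since `v` generates `N` over `B`, the orbit of `x` contains every pure tensor. -/

section Contraction

variable {k M N : Type*} [CommSemiring k] [AddCommMonoid M] [Module k M]
  [AddCommMonoid N] [Module k N]

theorem rTensor_smulRight_apply (ξ : Module.Dual k M) (u : M) (x : M ⊗[k] N) :
    (ξ.smulRight u).rTensor N x = u ⊗ₜ[k] TensorProduct.lid k N (ξ.rTensor N x) := by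
  induction x using TensorProduct.induction_on with
  | zero => simp
  | add x y hx hy => simp only [map_add, TensorProduct.tmul_add, hx, hy]
  | tmul m n => simp [TensorProduct.smul_tmul]

theorem exists_dual_lid_rTensor_ne_zero [Module.Free k M] {x : M ⊗[k] N} (hx : x ≠ 0) :
    ∃ ξ : Module.Dual k M, TensorProduct.lid k N (ξ.rTensor N x) ≠ 0 := by
  classical
  let ℬ := Module.Free.chooseBasis k M
  have hcoord : TensorProduct.equivFinsuppOfBasisLeft ℬ x ≠ 0 :=
    (LinearEquiv.map_ne_zero_iff _).mpr hx
  obtain ⟨i, hi⟩ := Finsupp.ne_iff.mp hcoord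
  rw [TensorProduct.equivFinsuppOfBasisLeft_apply, Finsupp.zero_apply] at hi
  exact ⟨ℬ.coord i, hi⟩

end Contraction

section Density

variable {k A M N : Type*} [CommSemiring k] [Ring A] [Algebra k A] [AddCommGroup M] [Module k M]
  [Module A M] [IsScalarTower k A M] [IsSemisimpleModule A M] [AddCommMonoid N] [Module k N]

theorem exists_forall_mem_smul_eq_apply_of_surjective_algebraMap_end
    (hend : Function.Surjective (algebraMap k (Module.End A M)))
    (f : M →ₗ[k] M) (s : Finset M) : ∃ a : A, ∀ m ∈ s, a • m = f m := by
  have f_comm (φ : Module.End A M) (m : M) : f (φ m) = φ (f m) := by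
    obtain ⟨c, rfl⟩ := hend φ
    simp only [Module.algebraMap_end_apply, map_smul]
  obtain ⟨a, ha⟩ := jacobson_density (R := A) { f with map_smul' := f_comm } s
  exact ⟨a, fun m hm ↦ (ha m hm).symm⟩

theorem exists_smul_eq_rTensor
    (hend : Function.Surjective (algebraMap k (Module.End A M)))
    (f : M →ₗ[k] M) (x : M ⊗[k] N) : ∃ a : A, a • x = f.rTensor N x := by
  classical
  obtain ⟨s, rfl⟩ := TensorProduct.exists_finset x
  obtain ⟨a, ha⟩ :=
    exists_forall_mem_smul_eq_apply_of_surjective_algebraMap_end hend f (s.image Prod.fst)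
  refine ⟨a, ?_⟩
  rw [Finset.smul_sum, map_sum]
  refine Finset.sum_congr rfl fun p hp ↦ ?_
  rw [TensorProduct.smul_tmul', ha p.1 (Finset.mem_image_of_mem _ hp), LinearMap.rTensor_tmul]

theorem exists_ne_zero_forall_exists_smul_eq_tmul [Module.Free k M]
    (hend : Function.Surjective (algebraMap k (Module.End A M)))
    {x : M ⊗[k] N} (hx : x ≠ 0) :
    ∃ v : N, v ≠ 0 ∧ ∀ u : M, ∃ a : A, a • x = u ⊗ₜ[k] v := by
  obtain ⟨ξ, hξ⟩ := exists_dual_lid_rTensor_ne_zero hx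
  refine ⟨_, hξ, fun u ↦ ?_⟩
  simpa only [rTensor_smulRight_apply] using exists_smul_eq_rTensor hend (ξ.smulRight u) x

end Density

theorem tmul_one_smul_eq_smul {k A B M N : Type*} [CommSemiring k] [Semiring A] [Semiring B]
    [Algebra k A] [Algebra k B] [AddCommMonoid M] [Module k M] [Module A M] [IsScalarTower k A M]
    [AddCommMonoid N] [Module k N] [Module B N] [Module (A ⊗[k] B) (M ⊗[k] N)]
    (hsmul : ∀ (a : A) (b : B) (u : M) (v : N),
      (a ⊗ₜ[k] b) • (u ⊗ₜ[k] v) = (a • u) ⊗ₜ[k] (b • v))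
    (a : A) (x : M ⊗[k] N) : (a ⊗ₜ[k] (1 : B)) • x = a • x := by
  induction x using TensorProduct.induction_on with
  | zero => simp only [smul_zero]
  | add x y hx hy => simp only [smul_add, hx, hy]
  | tmul u v => rw [hsmul, one_smul, TensorProduct.smul_tmul']

theorem stmt4_general {k A B M N : Type*} [Field k] [Ring A] [Ring B] [Algebra k A] [Algebra k B]
    [AddCommGroup M] [Module k M] [Module A M] [IsScalarTower k A M] [IsSimpleModule A M]
    [AddCommGroup N] [Module k N] [Module B N] [IsSimpleModule B N]
    [Module (A ⊗[k] B) (M ⊗[k] N)]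
    (hsmul : ∀ (a : A) (b : B) (u : M) (v : N),
      (a ⊗ₜ[k] b) • (u ⊗ₜ[k] v) = (a • u) ⊗ₜ[k] (b • v))
    (hend : Function.Surjective (algebraMap k (Module.End A M))) :
    IsSimpleModule (A ⊗[k] B) (M ⊗[k] N) := by
  have := IsSimpleModule.nontrivial A M
  have := IsSimpleModule.nontrivial B N
  refine isSimpleModule_iff_toSpanSingleton_surjective.mpr ⟨inferInstance, fun x hx ↦ ?_⟩
  obtain ⟨v, hv, hreach⟩ := exists_ne_zero_forall_exists_smul_eq_tmul hend hx
  rw [← LinearMap.range_eq_top, eq_top_iff]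
  rintro y -
  induction y using TensorProduct.induction_on with
  | zero => exact zero_mem _
  | add y z hy hz => exact add_mem hy hz
  | tmul u w =>
    obtain ⟨a, ha⟩ := hreach u
    obtain ⟨b, rfl⟩ := IsSimpleModule.toSpanSingleton_surjective B hv w
    refine ⟨(1 ⊗ₜ[k] b) * (a ⊗ₜ[k] 1), ?_⟩
    rw [LinearMap.toSpanSingleton_apply, mul_smul, tmul_one_smul_eq_smul hsmul, ha, hsmul,
      one_smul, LinearMap.toSpanSingleton_apply]

/-- let `A`, `B` be ℂ-algebras, `M` a simple `A`-module all of whose `A`-linear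
endomorphisms are multiplication by complex scalars, and `N` a simple `B`-module.  Then the
external product `M ⊗[ℂ] N`, with the `A ⊗[ℂ] B`-module structure determined by
`(a ⊗ b) • (u ⊗ v) = (a • u) ⊗ (b • v)`, is a simple `A ⊗[ℂ] B`-module. -/
theorem stmt4 (A B : Type*) [Ring A] [Ring B] [Algebra ℂ A] [Algebra ℂ B]
    (M N : Type*) [AddCommGroup M] [Module ℂ M] [Module A M] [IsScalarTower ℂ A M]
    [AddCommGroup N] [Module ℂ N] [Module B N] [IsScalarTower ℂ B N]
    [Module (A ⊗[ℂ] B) (M ⊗[ℂ] N)]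
    (hsmul : ∀ (a : A) (b : B) (u : M) (v : N),
      (a ⊗ₜ[ℂ] b) • (u ⊗ₜ[ℂ] v) = (a • u) ⊗ₜ[ℂ] (b • v))
    (hM : IsSimpleModule A M)
    (hMend : ∀ φ : M →ₗ[A] M, ∃ c : ℂ, ∀ x : M, φ x = algebraMap ℂ A c • x)
    (hN : IsSimpleModule B N) :
    IsSimpleModule (A ⊗[ℂ] B) (M ⊗[ℂ] N) := by
  refine stmt4_general hsmul fun φ ↦ (hMend φ).imp fun c hc ↦ LinearMap.ext fun x ↦ ?_
  rw [hc, algebraMap_smul, Module.algebraMap_end_apply]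
end

section
/- (Normal form lemma.) Let m ≥ 2, |β| ∈ ℂ, and c₃,…,c_m be pairwise distinct nonzero complex numbers. Set α₁ = x, α₂ = y, αⱼ = cⱼx + y for 3 ≤ j ≤ m, and in A₂ define P = X∂x + Y∂y − |β| and Q = (Π_{j=2}^m Aⱼ)∂y − Σ_{i=2}^m βᵢ Π_{j=2, j≠i}^m Aⱼ, where Aⱼ denotes the operator of multiplication by αⱼ and β₂,…,β_m ∈ ℂ with β₂+⋯+β_m arbitrary. Let N₀ ⊆ A₂ be the ℂ-linear span of the operators (Y∂x)^k for k ≥ 1, (Y∂x)^k(Y∂y)^l for k,l ≥ 1 with k+l ≤ m−2, and (Y∂y)^l(X∂y)^k for 0 ≤ l ≤ m−2 and k ≥ 0. Then every T ∈ A₂ that commutes with the Euler operator E = X∂x + Y∂y lies in N₀ + A₂P + A₂Q. -/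
set_option synthInstance.maxHeartbeats 1000000
set_option maxHeartbeats 1000000

open MvPolynomial

/-- Multiplication by the first variable `x`, as an endomorphism of `ℂ[x,y]`. -/
noncomputable def Xop : Module.End ℂ (MvPolynomial (Fin 2) ℂ) := LinearMap.mulLeft ℂ (X 0)

/-- Multiplication by the second variable `y`, as an endomorphism of `ℂ[x,y]`. -/
noncomputable def Yop : Module.End ℂ (MvPolynomial (Fin 2) ℂ) := LinearMap.mulLeft ℂ (X 1)

/-- The formal partial derivative `∂x`, as an endomorphism of `ℂ[x,y]`. -/
noncomputable def Dxop : Module.End ℂ (MvPolynomial (Fin 2) ℂ) :=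
  (pderiv (0 : Fin 2) : Derivation ℂ (MvPolynomial (Fin 2) ℂ) (MvPolynomial (Fin 2) ℂ)).toLinearMap

/-- The formal partial derivative `∂y`, as an endomorphism of `ℂ[x,y]`. -/
noncomputable def Dyop : Module.End ℂ (MvPolynomial (Fin 2) ℂ) :=
  (pderiv (1 : Fin 2) : Derivation ℂ (MvPolynomial (Fin 2) ℂ) (MvPolynomial (Fin 2) ℂ)).toLinearMap

/-- The Weyl algebra `A₂`, realized as the ℂ-subalgebra of `End_ℂ(ℂ[x,y])` generated by
`X`, `Y`, `∂x`, `∂y`. -/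
noncomputable def A2 : Subalgebra ℂ (Module.End ℂ (MvPolynomial (Fin 2) ℂ)) :=
  Algebra.adjoin ℂ {Xop, Yop, Dxop, Dyop}

/-- `X`, `Y`, `∂x`, `∂y` as elements of `A₂`. -/
noncomputable def wX : A2 := ⟨Xop, Algebra.subset_adjoin (by simp)⟩
noncomputable def wY : A2 := ⟨Yop, Algebra.subset_adjoin (by simp)⟩
noncomputable def wDx : A2 := ⟨Dxop, Algebra.subset_adjoin (by simp)⟩
noncomputable def wDy : A2 := ⟨Dyop, Algebra.subset_adjoin (by simp)⟩

/-- The operator `Aⱼ` of multiplication by the linear form `αⱼ`, where `α₂ = y` and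
`αⱼ = cⱼ·x + y` for `j ≥ 3`, as an element of `A₂`. -/
noncomputable def mulForm (c : ℕ → ℂ) (j : ℕ) : A2 := if j = 2 then wY else c j • wX + wY

/-! Fix a weight (the eigenvalue of `ad E`) and compare the normally ordered monomials `x ^ i y ^ j
∂x ^ k ∂y ^ l` of that weight by the pair (order `k + l`, then `j + k`). Leading monomials multiply.
Modulo `A₂ P` one has `x∂x ≡ -y∂y` up to lower order, so a leading monomial matters only through its
pair. The leading monomial of `Q` is `y ^ (m - 1) ∂y`, and every pair of weight zero is the pair of
a normal form or of a left multiple of `Q`; by induction on pairs all monomials of weight zero lie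
in `N₀ + A₂ P + A₂ Q`. They span the centralizer of `E`, because `ad E` is diagonalized by the
monomials. -/

/-- Four elements `x, y, p, q` of a ring satisfying the defining relations of the second Weyl
algebra, with `p` and `q` in the roles of `∂x` and `∂y`. -/
structure WeylGenerators (A : Type*) [Ring A] where
  (x y p q : A)
  commute_x_y : Commute x y
  commute_p_q : Commute p q
  commute_p_y : Commute p y
  commute_q_x : Commute q x
  p_mul_x : p * x = x * p + 1
  q_mul_y : q * y = y * q + 1

theorem pow_mul_eq_mul_pow_add {A : Type*} [Semiring A] {u v : A} (h : u * v = v * u + 1) (n : ℕ) :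
    u ^ n * v = v * u ^ n + n • u ^ (n - 1) := by
  induction n with
  | zero => simp
  | succ n ih =>
    have hn : n • (u ^ (n - 1) * u) = n • u ^ n := by cases n <;> simp [pow_succ]
    calc u ^ (n + 1) * v = u ^ n * (v * u + 1) := by rw [pow_succ, mul_assoc, h]
      _ = u ^ n * v * u + u ^ n := by rw [mul_add, mul_one, mul_assoc]
      _ = v * u ^ (n + 1) + (n • u ^ n + u ^ n) := by
        rw [ih, add_mul, smul_mul_assoc, hn, mul_assoc, ← pow_succ, add_assoc]
      _ = v * u ^ (n + 1) + (n + 1) • u ^ n := by rw [succ_nsmul]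

namespace WeylGenerators

variable {A : Type*} [Ring A] (W : WeylGenerators A)

/-- The Euler operator `x p + y q`. -/
def euler : A := W.x * W.p + W.y * W.q

/-- The normally ordered monomial `x ^ i y ^ j p ^ k q ^ l`. Its *weight* is `i + j - k - l` and its
*order* is `k + l`. -/
def mon (i j k l : ℕ) : A := W.x ^ i * W.y ^ j * W.p ^ k * W.q ^ l

theorem mon_zero : W.mon 0 0 0 0 = 1 := by simp [mon]

theorem mon_mul_q (i j k l : ℕ) : W.mon i j k l * W.q = W.mon i j k (l + 1) := by
  rw [mon, mon, pow_succ, mul_assoc _ _ W.q]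

theorem mon_mul_p (i j k l : ℕ) : W.mon i j k l * W.p = W.mon i j (k + 1) l := by
  rw [mon, mon, mul_assoc _ _ W.p, ← (W.commute_p_q.pow_right l).eq, ← mul_assoc,
    mul_assoc _ _ W.p, ← pow_succ]

theorem mon_mul_y (i j k l : ℕ) :
    W.mon i j k l * W.y = W.mon i (j + 1) k l + l • W.mon i j k (l - 1) := by
  have hp : W.p ^ k * W.y = W.y * W.p ^ k := W.commute_p_y.pow_left k
  simp only [mon, mul_assoc, pow_mul_eq_mul_pow_add W.q_mul_y, mul_add, mul_smul_comm]
  simp only [← mul_assoc (W.p ^ k) W.y, hp, pow_succ, mul_assoc]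

theorem mon_mul_x (i j k l : ℕ) :
    W.mon i j k l * W.x = W.mon (i + 1) j k l + k • W.mon i j (k - 1) l := by
  have hq : W.q ^ l * W.x = W.x * W.q ^ l := W.commute_q_x.pow_left l
  have hy : W.y ^ j * W.x = W.x * W.y ^ j := W.commute_x_y.symm.pow_left j
  simp only [mon, mul_assoc, hq]
  simp only [← mul_assoc (W.p ^ k) W.x, pow_mul_eq_mul_pow_add W.p_mul_x, add_mul, mul_add,
    smul_mul_assoc, mul_smul_comm]
  simp only [mul_assoc, ← mul_assoc (W.y ^ j) W.x, hy, pow_succ]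

variable (R : Type*) [CommRing R] [Algebra R A]

/-- The span of the normally ordered monomials of the same weight as `x ^ i y ^ j p ^ k q ^ l` which
precede it, monomials being compared by the pair (order, `j + k`), lexicographically. The order
together with `j + k` determines a monomial of given weight up to exchanging `x p` with `y q`. -/
def lower (i j k l : ℕ) : Submodule R A :=
  Submodule.span R {t | ∃ i' j' k' l', i' + j' + (k + l) = i + j + (k' + l') ∧
    (k' + l' < k + l ∨ k' + l' = k + l ∧ j' + k' < j + k) ∧ W.mon i' j' k' l' = t}

/-- `W.HasLead R t i j k l` says that `t` is homogeneous for the weight, with leading monomial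
`x ^ i y ^ j p ^ k q ^ l` of coefficient one in the sense of `WeylGenerators.lower`. -/
def HasLead (t : A) (i j k l : ℕ) : Prop := t - W.mon i j k l ∈ W.lower R i j k l

/-- The span `N₀` of the normal forms, for an operator `Q` with leading monomial
`y ^ (d + 1) q`. -/
def normalForms (d : ℕ) : Submodule R A :=
  Submodule.span R
    ({a | ∃ k : ℕ, 1 ≤ k ∧ a = (W.y * W.p) ^ k} ∪
     {a | ∃ k l : ℕ, 1 ≤ k ∧ 1 ≤ l ∧ k + l ≤ d ∧ a = (W.y * W.p) ^ k * (W.y * W.q) ^ l} ∪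
     {a | ∃ l k : ℕ, l ≤ d ∧ a = (W.y * W.q) ^ l * (W.x * W.q) ^ k})

variable {W R} {i j k l i' j' k' l' : ℕ} {t u : A}

theorem mon_mem_lower (hw : i' + j' + (k + l) = i + j + (k' + l'))
    (hlt : k' + l' < k + l ∨ k' + l' = k + l ∧ j' + k' < j + k) :
    W.mon i' j' k' l' ∈ W.lower R i j k l :=
  Submodule.subset_span ⟨i', j', k', l', hw, hlt, rfl⟩

theorem lower_le {V : Submodule R A} (H : ∀ i' j' k' l', i' + j' + (k + l) = i + j + (k' + l') →
    (k' + l' < k + l ∨ k' + l' = k + l ∧ j' + k' < j + k) → W.mon i' j' k' l' ∈ V) :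
    W.lower R i j k l ≤ V := by
  refine Submodule.span_le.2 ?_
  rintro _ ⟨i', j', k', l', hw, hlt, rfl⟩
  exact H i' j' k' l' hw hlt

theorem lower_mono (hw : i' + j' + (k + l) = i + j + (k' + l'))
    (hle : k' + l' < k + l ∨ k' + l' = k + l ∧ j' + k' ≤ j + k) :
    W.lower R i' j' k' l' ≤ W.lower R i j k l :=
  lower_le fun _ _ _ _ hw' hlt => mon_mem_lower (by omega) (by omega)

variable (R) in
theorem hasLead_mon (i j k l : ℕ) : W.HasLead R (W.mon i j k l) i j k l := by
  rw [HasLead, sub_self]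
  exact zero_mem _

theorem HasLead.add_mem_lower (ht : W.HasLead R t i j k l) (hu : u ∈ W.lower R i j k l) :
    W.HasLead R (t + u) i j k l := by
  rw [HasLead, add_sub_right_comm]
  exact add_mem ht hu

theorem HasLead.sub_mem_lower (ht : W.HasLead R t i j k l) (hu : u ∈ W.lower R i j k l) :
    W.HasLead R (t - u) i j k l := by
  rw [sub_eq_add_neg]
  exact ht.add_mem_lower (neg_mem hu)

theorem HasLead.mem_lower (ht : W.HasLead R t i' j' k' l')
    (hw : i' + j' + (k + l) = i + j + (k' + l'))
    (hlt : k' + l' < k + l ∨ k' + l' = k + l ∧ j' + k' < j + k) : t ∈ W.lower R i j k l := by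
  rw [← sub_add_cancel t (W.mon i' j' k' l')]
  exact add_mem (lower_mono hw (by omega) ht) (mon_mem_lower hw hlt)

theorem HasLead.mon_mem {J : Submodule R A} (ht : W.HasLead R t i j k l) (htJ : t ∈ J)
    (hJ : W.lower R i j k l ≤ J) : W.mon i j k l ∈ J :=
  (Submodule.sub_mem_iff_right J htJ).1 (hJ ht)

theorem mul_mem_lower {r : A}
    (hr : ∀ a b c d, W.HasLead R (W.mon a b c d * r) (a + i) (b + j) (c + k) (d + l))
    (ht : t ∈ W.lower R i' j' k' l') :
    t * r ∈ W.lower R (i' + i) (j' + j) (k' + k) (l' + l) :=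
  lower_le (V := (W.lower R (i' + i) (j' + j) (k' + k) (l' + l)).comap (LinearMap.mulRight R r))
    (fun a b c d hw hlt => (hr a b c d).mem_lower (by omega) (by omega)) ht

theorem HasLead.mul_of_mon_mul {r : A}
    (hr : ∀ a b c d, W.HasLead R (W.mon a b c d * r) (a + i) (b + j) (c + k) (d + l))
    (ht : W.HasLead R t i' j' k' l') :
    W.HasLead R (t * r) (i' + i) (j' + j) (k' + k) (l' + l) := by
  have h := (hr i' j' k' l').add_mem_lower (mul_mem_lower hr ht)
  rwa [sub_mul, add_sub_cancel] at h

theorem hasLead_mon_mul_pow {r : A}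
    (hr : ∀ a b c d, W.HasLead R (W.mon a b c d * r) (a + i) (b + j) (c + k) (d + l))
    (n a b c d : ℕ) :
    W.HasLead R (W.mon a b c d * r ^ n) (a + n * i) (b + n * j) (c + n * k) (d + n * l) := by
  induction n with
  | zero => simpa using hasLead_mon R a b c d
  | succ n ih => simpa only [pow_succ, ← mul_assoc, add_one_mul, ← add_assoc] using
      ih.mul_of_mon_mul hr

variable (R) in
theorem hasLead_mon_mul_x (i j k l : ℕ) :
    W.HasLead R (W.mon i j k l * W.x) (i + 1) (j + 0) (k + 0) (l + 0) := by
  rw [mon_mul_x]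
  refine (hasLead_mon R _ _ _ _).add_mem_lower ?_
  cases k with
  | zero => simp
  | succ k => exact nsmul_mem (mon_mem_lower (by omega) (by omega)) _

variable (R) in
theorem hasLead_mon_mul_y (i j k l : ℕ) :
    W.HasLead R (W.mon i j k l * W.y) (i + 0) (j + 1) (k + 0) (l + 0) := by
  rw [mon_mul_y]
  refine (hasLead_mon R _ _ _ _).add_mem_lower ?_
  cases l with
  | zero => simp
  | succ l => exact nsmul_mem (mon_mem_lower (by omega) (by omega)) _

variable (R) in
theorem hasLead_mon_mul_p (i j k l : ℕ) :
    W.HasLead R (W.mon i j k l * W.p) (i + 0) (j + 0) (k + 1) (l + 0) := by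
  rw [mon_mul_p]
  exact hasLead_mon R _ _ _ _

variable (R) in
theorem hasLead_mon_mul_q (i j k l : ℕ) :
    W.HasLead R (W.mon i j k l * W.q) (i + 0) (j + 0) (k + 0) (l + 1) := by
  rw [mon_mul_q]
  exact hasLead_mon R _ _ _ _

variable (R) in
theorem hasLead_mon_mul_mon (i j k l i' j' k' l' : ℕ) :
    W.HasLead R (W.mon i' j' k' l' * W.mon i j k l) (i' + i) (j' + j) (k' + k) (l' + l) := by
  have hx := hasLead_mon_mul_pow (hasLead_mon_mul_x (W := W) R) i i' j' k' l'
  have hxy := hx.mul_of_mon_mul (hasLead_mon_mul_pow (hasLead_mon_mul_y R) j)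
  have hxyp := hxy.mul_of_mon_mul (hasLead_mon_mul_pow (hasLead_mon_mul_p R) k)
  have hxypq := hxyp.mul_of_mon_mul (hasLead_mon_mul_pow (hasLead_mon_mul_q R) l)
  simpa only [mul_zero, mul_one, add_zero, mul_assoc, mon] using hxypq

theorem HasLead.mul (ht : W.HasLead R t i j k l) (hu : W.HasLead R u i' j' k' l') :
    W.HasLead R (t * u) (i + i') (j + j') (k + k') (l + l') := by
  refine ht.mul_of_mon_mul fun a b c d => ?_
  have hlow : W.lower R i' j' k' l' ≤ (W.lower R (a + i') (b + j') (c + k') (d + l')).comap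
      (LinearMap.mulLeft R (W.mon a b c d)) :=
    lower_le fun i j k l hw hlt =>
      (hasLead_mon_mul_mon R i j k l a b c d).mem_lower (by omega) (by omega)
  have h := (hasLead_mon_mul_mon R i' j' k' l' a b c d).add_mem_lower (hlow hu)
  rwa [LinearMap.mulLeft_apply, mul_sub, add_sub_cancel] at h

theorem HasLead.pow (ht : W.HasLead R t i j k l) (n : ℕ) :
    W.HasLead R (t ^ n) (n * i) (n * j) (n * k) (n * l) := by
  induction n with
  | zero => simpa [mon_zero] using hasLead_mon (W := W) R 0 0 0 0
  | succ n ih => simpa only [pow_succ, add_one_mul] using ih.mul ht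

variable (W R)

theorem hasLead_x : W.HasLead R W.x 1 0 0 0 := by simpa [mon] using hasLead_mon (W := W) R 1 0 0 0

theorem hasLead_y : W.HasLead R W.y 0 1 0 0 := by simpa [mon] using hasLead_mon (W := W) R 0 1 0 0

theorem hasLead_p : W.HasLead R W.p 0 0 1 0 := by simpa [mon] using hasLead_mon (W := W) R 0 0 1 0

theorem hasLead_q : W.HasLead R W.q 0 0 0 1 := by simpa [mon] using hasLead_mon (W := W) R 0 0 0 1

theorem hasLead_yp_pow_mul_yq_pow (k l : ℕ) :
    W.HasLead R ((W.y * W.p) ^ k * (W.y * W.q) ^ l) 0 (k + l) k l := by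
  simpa using (((W.hasLead_y R).mul (W.hasLead_p R)).pow k).mul
    (((W.hasLead_y R).mul (W.hasLead_q R)).pow l)

theorem hasLead_yq_pow_mul_xq_pow (l k : ℕ) :
    W.HasLead R ((W.y * W.q) ^ l * (W.x * W.q) ^ k) k l 0 (l + k) := by
  simpa using (((W.hasLead_y R).mul (W.hasLead_q R)).pow l).mul
    (((W.hasLead_x R).mul (W.hasLead_q R)).pow k)

theorem yq_pow_mul_xq_pow_mem_normalForms {d l : ℕ} (k : ℕ) (hl : l ≤ d) :
    (W.y * W.q) ^ l * (W.x * W.q) ^ k ∈ W.normalForms R d :=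
  Submodule.subset_span (Or.inr ⟨l, k, hl, rfl⟩)

theorem yp_pow_mul_yq_pow_mem_normalForms {d k l : ℕ} (h : k + l ≤ d ∨ l = 0) :
    (W.y * W.p) ^ k * (W.y * W.q) ^ l ∈ W.normalForms R d := by
  rcases k.eq_zero_or_pos with rfl | hk
  · simpa using W.yq_pow_mul_xq_pow_mem_normalForms R (d := d) (l := l) 0 (by omega)
  rcases l.eq_zero_or_pos with rfl | hl
  · rw [pow_zero, mul_one]
    exact Submodule.subset_span (Or.inl (Or.inl ⟨k, hk, rfl⟩))
  · exact Submodule.subset_span (Or.inl (Or.inr ⟨k, l, hk, hl, by omega, rfl⟩))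

theorem hasLead_smul_x_add_y (c : R) : W.HasLead R (c • W.x + W.y) 0 1 0 0 := by
  rw [add_comm]
  exact (W.hasLead_y R).add_mem_lower
    (Submodule.smul_mem _ c ((W.hasLead_x R).mem_lower (by omega) (by omega)))

variable {W R}

theorem HasLead.list_prod {L : List A} (hL : ∀ f ∈ L, W.HasLead R f i j k l) :
    W.HasLead R L.prod (L.length * i) (L.length * j) (L.length * k) (L.length * l) := by
  induction L with
  | nil => simpa [mon_zero] using hasLead_mon (W := W) R 0 0 0 0
  | cons f L ih =>
    rw [List.forall_mem_cons] at hL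
    simpa only [List.prod_cons, List.length_cons, add_one_mul, add_comm] using hL.1.mul (ih hL.2)

section Reduction

variable {J : Submodule R A} {b : R}

theorem mon_add_mon_mem (hP : ∀ t, t * (W.euler - algebraMap R A b) ∈ J)
    (hJ : W.lower R (i + 1) j (k + 1) l ≤ J) :
    W.mon (i + 1) j (k + 1) l + W.mon i (j + 1) k (l + 1) ∈ J := by
  have hM := hasLead_mon (W := W) R i j k l
  have hxp := hM.mul ((W.hasLead_x R).mul (W.hasLead_p R))
  have hyq := hM.mul ((W.hasLead_y R).mul (W.hasLead_q R))
  have hb : b • W.mon i j k l ∈ J :=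
    J.smul_mem b (hJ (mon_mem_lower (by omega) (by omega)))
  have hrest := add_mem (hJ (lower_mono (by omega) (by omega) hxp))
    (hJ (lower_mono (by omega) (by omega) hyq))
  convert sub_mem (add_mem (hP (W.mon i j k l)) hb) hrest using 1
  rw [euler, mul_sub, mul_add, ← Algebra.commutes, ← Algebra.smul_def]
  simp only [add_zero, zero_add]
  abel

theorem mon_mem_iff_mon_mem_of_add (hP : ∀ t, t * (W.euler - algebraMap R A b) ∈ J) (e : ℕ)
    (hJ : W.lower R (i + e) j (k + e) l ≤ J) :
    W.mon (i + e) j (k + e) l ∈ J ↔ W.mon i (j + e) k (l + e) ∈ J := by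
  induction e generalizing j l with
  | zero => rfl
  | succ e ih =>
    have hstep : W.mon (i + e + 1) j (k + e + 1) l ∈ J ↔
        W.mon (i + e) (j + 1) (k + e) (l + 1) ∈ J := by
      have hsum := mon_add_mon_mem hP hJ
      exact ⟨fun h => (J.add_mem_iff_right h).1 hsum, fun h => (J.add_mem_iff_left h).1 hsum⟩
    rw [← add_assoc, ← add_assoc, hstep,
      ih ((lower_mono (by omega) (by omega)).trans hJ), add_right_comm j, add_right_comm l,
      add_assoc, add_assoc]

theorem mon_mem_iff_mon_mem (hP : ∀ t, t * (W.euler - algebraMap R A b) ∈ J)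
    (hJ : W.lower R i j k l ≤ J) (hij : i' + j' = i + j) (hkl : k' + l' = k + l)
    (hjk : j' + k' = j + k) : W.mon i j k l ∈ J ↔ W.mon i' j' k' l' ∈ J := by
  wlog hk : k' ≤ k generalizing i j k l i' j' k' l'
  · exact (this ((lower_mono (by omega) (by omega)).trans hJ) hij.symm hkl.symm hjk.symm
      (by omega)).symm
  obtain ⟨e, rfl⟩ := Nat.exists_eq_add_of_le hk
  obtain rfl : i = i' + e := by omega
  obtain rfl : j' = j + e := by omega
  obtain rfl : l' = l + e := by omega
  exact mon_mem_iff_mon_mem_of_add hP e hJ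

theorem mon_mem_of_lower_le
    (H : ∀ i j k l, i + j = k + l → W.lower R i j k l ≤ J → W.mon i j k l ∈ J)
    (hw : i + j = k + l) : W.mon i j k l ∈ J := by
  induction hn : k + l using Nat.strong_induction_on generalizing i j k l with
  | _ n ihn =>
  induction hs : j + k using Nat.strong_induction_on generalizing i j k l with
  | _ s ihs =>
  refine H i j k l hw (lower_le fun i' j' k' l' hw' hlt => ?_)
  rcases hlt with hlt | ⟨heq, hlt⟩
  · exact ihn _ (hn ▸ hlt) (by omega) rfl
  · exact ihs _ (hs ▸ hlt) (by omega) (by omega) rfl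

theorem exists_hasLead_mem {d : ℕ} {Q : A} (hQ : W.HasLead R Q 0 (d + 1) 0 1)
    (hQJ : ∀ t, t * Q ∈ J) (hN : W.normalForms R d ≤ J) (hw : i + j = k + l) :
    ∃ t ∈ J, ∃ i' j' k' l', i' + j' = i + j ∧ k' + l' = k + l ∧ j' + k' = j + k ∧
      W.HasLead R t i' j' k' l' := by
  by_cases hyqxq : j ≤ l ∧ j + k ≤ d
  · exact ⟨_, hN (W.yq_pow_mul_xq_pow_mem_normalForms R (l - j) hyqxq.2),
      l - j, j + k, 0, j + k + (l - j), by omega, by omega, by omega,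
      W.hasLead_yq_pow_mul_xq_pow R _ _⟩
  by_cases hypyq : l ≤ j ∧ (j - l + (i + l) ≤ d ∨ i + l = 0)
  · exact ⟨_, hN (W.yp_pow_mul_yq_pow_mem_normalForms R hypyq.2),
      0, j - l + (i + l), j - l, i + l, by omega, by omega, by omega,
      W.hasLead_yp_pow_mul_yq_pow R _ _⟩
  obtain ⟨i', j', k', l', hij, hkl, hjk⟩ : ∃ i' j' k' l', i' + (j' + (d + 1)) = i + j ∧
      k' + (l' + 1) = k + l ∧ (j' + (d + 1)) + k' = j + k := by
    rcases le_total (j + k - (d + 1)) (k + l - 1) with hle | hle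
    · exact ⟨k + l - (d + 1), 0, j + k - (d + 1), k + l - 1 - (j + k - (d + 1)),
        by omega, by omega, by omega⟩
    · exact ⟨i + l - 1, j + k - (d + 1) - (k + l - 1), k + l - 1, 0,
        by omega, by omega, by omega⟩
  have hlead := (hasLead_mon R i' j' k' l').mul hQ
  exact ⟨_, hQJ (W.mon i' j' k' l'), i', j' + (d + 1), k', l' + 1, hij, hkl, hjk, hlead⟩

theorem mon_mem_of_normalForms_le {d : ℕ} {Q : A} (hQ : W.HasLead R Q 0 (d + 1) 0 1)
    (hP : ∀ t, t * (W.euler - algebraMap R A b) ∈ J) (hQJ : ∀ t, t * Q ∈ J)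
    (hN : W.normalForms R d ≤ J) (hw : i + j = k + l) : W.mon i j k l ∈ J := by
  refine mon_mem_of_lower_le (fun i j k l hw hJ => ?_) hw
  obtain ⟨t, htJ, i', j', k', l', hij, hkl, hjk, ht⟩ := exists_hasLead_mem hQ hQJ hN hw
  exact (mon_mem_iff_mon_mem hP hJ hij hkl hjk).2
    (ht.mon_mem htJ ((lower_mono (by omega) (by omega)).trans hJ))

end Reduction

section Weight

open Module

variable (W R)

theorem span_mon_eq_top (hgen : Algebra.adjoin R {W.x, W.y, W.p, W.q} = ⊤) :
    Submodule.span R {t | ∃ i j k l, W.mon i j k l = t} = ⊤ := by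
  set V := Submodule.span R {t | ∃ i j k l, W.mon i j k l = t}
  have hmon : ∀ i j k l, W.mon i j k l ∈ V := fun i j k l =>
    Submodule.subset_span ⟨i, j, k, l, rfl⟩
  have hmem : ∀ {t i j k l}, W.HasLead R t i j k l → t ∈ V := fun {t i j k l} ht => by
    rw [← sub_add_cancel t (W.mon i j k l)]
    exact add_mem (lower_le (fun i j k l _ _ => hmon i j k l) ht) (hmon i j k l)
  have hone : (1 : A) ∈ V := W.mon_zero ▸ hmon 0 0 0 0
  have hmul : V * V ≤ V := by
    rw [Submodule.span_mul_span, Submodule.span_le]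
    rintro _ ⟨_, ⟨i, j, k, l, rfl⟩, _, ⟨i', j', k', l', rfl⟩, rfl⟩
    exact hmem (hasLead_mon_mul_mon R i' j' k' l' i j k l)
  have hle : Algebra.adjoin R {W.x, W.y, W.p, W.q} ≤
      V.toSubalgebra hone fun t u ht hu => hmul (Submodule.mul_mem_mul ht hu) := by
    rw [Algebra.adjoin_le_iff]
    rintro _ (rfl | rfl | rfl | rfl)
    exacts [hmem (W.hasLead_x R), hmem (W.hasLead_y R), hmem (W.hasLead_p R),
      hmem (W.hasLead_q R)]
  exact eq_top_iff.2 fun t _ => hle (hgen ▸ Algebra.mem_top)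

/-- The commutator with the Euler operator; its eigenvalues are the weights. -/
def adEuler : End R A := LinearMap.mulLeft R W.euler - LinearMap.mulRight R W.euler

variable {W R}

theorem mem_eigenspace_adEuler_iff {a : R} :
    t ∈ (W.adEuler R).eigenspace a ↔ W.euler * t - t * W.euler = a • t :=
  End.mem_eigenspace_iff

theorem mul_mem_eigenspace_adEuler {a c : R} (ht : t ∈ (W.adEuler R).eigenspace a)
    (hu : u ∈ (W.adEuler R).eigenspace c) : t * u ∈ (W.adEuler R).eigenspace (a + c) := by
  rw [mem_eigenspace_adEuler_iff] at *
  calc W.euler * (t * u) - t * u * W.euler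
      = (W.euler * t - t * W.euler) * u + t * (W.euler * u - u * W.euler) := by noncomm_ring
    _ = (a + c) • (t * u) := by rw [ht, hu, smul_mul_assoc, mul_smul_comm, add_smul]

theorem pow_mem_eigenspace_adEuler {a : R} (ht : t ∈ (W.adEuler R).eigenspace a) (n : ℕ) :
    t ^ n ∈ (W.adEuler R).eigenspace (n * a) := by
  induction n with
  | zero => simp [adEuler]
  | succ n ih =>
    rw [pow_succ, Nat.cast_succ, add_one_mul]
    exact mul_mem_eigenspace_adEuler ih ht

variable (W R)

theorem x_mem_eigenspace_adEuler : W.x ∈ (W.adEuler R).eigenspace 1 := by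
  have hyx : W.y * (W.x * W.q) = W.x * (W.y * W.q) := W.commute_x_y.symm.left_comm _
  simp only [mem_eigenspace_adEuler_iff, euler, add_mul, mul_add, mul_assoc, W.p_mul_x,
    W.commute_q_x.eq, hyx, mul_one, one_smul]
  abel

theorem y_mem_eigenspace_adEuler : W.y ∈ (W.adEuler R).eigenspace 1 := by
  have hyx : W.y * (W.x * W.p) = W.x * (W.y * W.p) := W.commute_x_y.symm.left_comm _
  simp only [mem_eigenspace_adEuler_iff, euler, add_mul, mul_add, mul_assoc, W.q_mul_y,
    W.commute_p_y.eq, hyx, mul_one, one_smul]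
  abel

theorem p_mem_eigenspace_adEuler : W.p ∈ (W.adEuler R).eigenspace (-1) := by
  simp only [mem_eigenspace_adEuler_iff, euler, add_mul, mul_add, ← mul_assoc, W.p_mul_x,
    W.commute_p_y.eq, one_mul, neg_one_smul]
  rw [mul_assoc W.y, mul_assoc W.y, W.commute_p_q.eq]
  abel

theorem q_mem_eigenspace_adEuler : W.q ∈ (W.adEuler R).eigenspace (-1) := by
  simp only [mem_eigenspace_adEuler_iff, euler, add_mul, mul_add, ← mul_assoc, W.q_mul_y,
    W.commute_q_x.eq, one_mul, neg_one_smul]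
  rw [mul_assoc W.x, mul_assoc W.x, W.commute_p_q.eq]
  abel

theorem mon_mem_eigenspace_adEuler (i j k l : ℕ) :
    W.mon i j k l ∈ (W.adEuler R).eigenspace ((i + j - k - l : ℤ) : R) := by
  have hmon := mul_mem_eigenspace_adEuler (mul_mem_eigenspace_adEuler (mul_mem_eigenspace_adEuler
    (pow_mem_eigenspace_adEuler (W.x_mem_eigenspace_adEuler R) i)
    (pow_mem_eigenspace_adEuler (W.y_mem_eigenspace_adEuler R) j))
    (pow_mem_eigenspace_adEuler (W.p_mem_eigenspace_adEuler R) k))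
    (pow_mem_eigenspace_adEuler (W.q_mem_eigenspace_adEuler R) l)
  have hw : ((i + j - k - l : ℤ) : R) = i * 1 + j * 1 + k * -1 + l * -1 := by push_cast; ring
  rwa [hw]

variable {W R}

theorem mem_of_commute_euler [IsDomain R] [CharZero R] [IsTorsionFree R A]
    (hgen : Algebra.adjoin R {W.x, W.y, W.p, W.q} = ⊤) {J : Submodule R A}
    (hJ : ∀ i j k l, i + j = k + l → W.mon i j k l ∈ J) (ht : Commute t W.euler) : t ∈ J := by
  set E := W.adEuler R
  have htop : ⊤ ≤ (J ⊓ E.eigenspace 0) ⊔ ⨆ (c : R) (_ : c ≠ 0), E.eigenspace c := by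
    rw [← W.span_mon_eq_top R hgen, Submodule.span_le]
    rintro _ ⟨i, j, k, l, rfl⟩
    have hmon := W.mon_mem_eigenspace_adEuler R i j k l
    by_cases hw : (i + j - k - l : ℤ) = 0
    · rw [hw, Int.cast_zero] at hmon
      exact Submodule.mem_sup_left ⟨hJ i j k l (by omega), hmon⟩
    · exact Submodule.mem_sup_right
        (Submodule.mem_iSup_of_mem _ (Submodule.mem_iSup_of_mem (Int.cast_ne_zero.2 hw) hmon))
  obtain ⟨u, hu, v, hv, rfl⟩ := Submodule.mem_sup.1 (htop (Submodule.mem_top (x := t)))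
  have huv : u + v ∈ E.eigenspace 0 := by
    rw [mem_eigenspace_adEuler_iff, zero_smul, ht.eq, sub_self]
  have hv0 : v ∈ E.eigenspace 0 := (Submodule.add_mem_iff_right _ hu.2).1 huv
  have hv_zero : v = 0 := (Submodule.disjoint_def.1 (E.eigenspaces_iSupIndep 0)) v hv0 hv
  rw [hv_zero, add_zero]
  exact hu.1

end Weight

end WeylGenerators

theorem stmt11_general {R A : Type*} [CommRing R] [IsDomain R] [CharZero R] [Ring A] [Algebra R A]
    [Module.IsTorsionFree R A] {W : WeylGenerators A}
    (hgen : Algebra.adjoin R {W.x, W.y, W.p, W.q} = ⊤) {d : ℕ} (b : R) {Q : A}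
    (hQ : W.HasLead R Q 0 (d + 1) 0 1) {T : A} (hT : Commute T W.euler) :
    ∃ u ∈ W.normalForms R d, ∃ v ∈ Ideal.span {W.euler - algebraMap R A b, Q}, T = u + v := by
  set P := W.euler - algebraMap R A b
  set J := W.normalForms R d ⊔ (Ideal.span {P, Q}).restrictScalars R
  have hJ : ∀ {r : A} (t : A), r ∈ ({P, Q} : Set A) → t * r ∈ J := fun t hr =>
    Submodule.mem_sup_right ((Ideal.span {P, Q}).mul_mem_left t (Ideal.subset_span hr))
  have hTJ : T ∈ J := WeylGenerators.mem_of_commute_euler hgen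
    (fun i j k l hw => WeylGenerators.mon_mem_of_normalForms_le (b := b) hQ
      (fun t => hJ t (Or.inl rfl)) (fun t => hJ t (Or.inr rfl)) le_sup_left hw) hT
  obtain ⟨u, hu, v, hv, huv⟩ := Submodule.mem_sup.1 hTJ
  exact ⟨u, hu, v, hv, huv.symm⟩

theorem pderiv_comm {σ R : Type*} [CommRing R] (i j : σ) (f : MvPolynomial σ R) :
    pderiv i (pderiv j f) = pderiv j (pderiv i f) := by
  classical
  have hlie : ⁅(pderiv i : Derivation R (MvPolynomial σ R) (MvPolynomial σ R)), pderiv j⁆ = 0 :=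
    derivation_ext fun k => by
      rw [Derivation.commutator_apply, pderiv_X, pderiv_X]
      simp [Pi.single_apply, apply_ite]
  rw [← sub_eq_zero, ← Derivation.commutator_apply, hlie, Derivation.zero_apply]

/-- The generators `X, Y, ∂x, ∂y` of `A2`. -/
noncomputable def weylA2 : WeylGenerators A2 where
  x := wX
  y := wY
  p := wDx
  q := wDy
  commute_x_y := Subtype.ext (LinearMap.ext fun f => mul_left_comm (X 0) (X 1) f)
  commute_p_q := Subtype.ext (LinearMap.ext fun f => pderiv_comm 0 1 f)
  commute_p_y := Subtype.ext (LinearMap.ext fun f => by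
    simp [wY, wDx, Yop, Dxop, Derivation.leibniz])
  commute_q_x := Subtype.ext (LinearMap.ext fun f => by
    simp [wX, wDy, Xop, Dyop, Derivation.leibniz])
  p_mul_x := Subtype.ext (LinearMap.ext fun f => by
    simp [wX, wDx, Xop, Dxop, Derivation.leibniz])
  q_mul_y := Subtype.ext (LinearMap.ext fun f => by
    simp [wY, wDy, Yop, Dyop, Derivation.leibniz])

theorem adjoin_weylA2_eq_top :
    Algebra.adjoin ℂ {weylA2.x, weylA2.y, weylA2.p, weylA2.q} = ⊤ := by
  have hgen : Algebra.adjoin ℂ (((↑) : A2 → _) ⁻¹' {Xop, Yop, Dxop, Dyop}) = ⊤ :=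
    Algebra.adjoin_adjoin_coe_preimage
  rw [← hgen]
  congr 1
  ext t
  simp only [Set.mem_insert_iff, Set.mem_singleton_iff, Set.mem_preimage, Subtype.ext_iff,
    weylA2, wX, wY, wDx, wDy]

theorem hasLead_mulForm (c : ℕ → ℂ) (j : ℕ) : weylA2.HasLead ℂ (mulForm c j) 0 1 0 0 := by
  rw [mulForm]
  split_ifs
  · exact weylA2.hasLead_y ℂ
  · exact weylA2.hasLead_smul_x_add_y ℂ (c j)

theorem hasLead_prod_map_mulForm (c : ℕ → ℂ) (L : List ℕ) :
    weylA2.HasLead ℂ (L.map (mulForm c)).prod 0 L.length 0 0 := by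
  simpa using WeylGenerators.HasLead.list_prod (L := L.map (mulForm c)) (W := weylA2)
    (List.forall_mem_map.2 fun j _ => hasLead_mulForm c j)

theorem length_filter_ne_add_one_of_nodup {α : Type*} [DecidableEq α] {L : List α} {a : α}
    (hL : L.Nodup) (ha : a ∈ L) : (L.filter (· ≠ a)).length + 1 = L.length := by
  have h := List.length_erase_add_one ha
  rw [hL.erase_eq_filter] at h
  simpa [bne, beq_eq_decide] using h

theorem hasLead_prod_mul_wDy_sub_sum (m : ℕ) (c β : ℕ → ℂ) :
    weylA2.HasLead ℂ (((List.range' 2 (m - 1)).map (mulForm c)).prod * wDy -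
      ∑ i ∈ Finset.Icc 2 m,
        β i • (((List.range' 2 (m - 1)).filter (· ≠ i)).map (mulForm c)).prod)
      0 (m - 1) 0 1 := by
  have hmain := (hasLead_prod_map_mulForm c (List.range' 2 (m - 1))).mul (weylA2.hasLead_q ℂ)
  rw [List.length_range'] at hmain
  refine hmain.sub_mem_lower (sum_mem fun i hi => Submodule.smul_mem _ _ ?_)
  have hi_mem : i ∈ List.range' 2 (m - 1) := by
    rw [Finset.mem_Icc] at hi
    exact List.mem_range'_1.2 (by omega)
  have hlen := length_filter_ne_add_one_of_nodup List.nodup_range' hi_mem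
  rw [List.length_range'] at hlen
  exact (hasLead_prod_map_mulForm c _).mem_lower (by omega) (by omega)

/-- normal form lemma: with `P = X∂x + Y∂y − |β|` and
`Q = (Π_{j=2}^m Aⱼ)∂y − Σ_{i=2}^m βᵢ Π_{j=2,j≠i}^m Aⱼ` (the `cⱼ`, `3 ≤ j ≤ m`, pairwise
distinct and nonzero), every `T ∈ A₂` commuting with the Euler operator `E = X∂x + Y∂y`
lies in `N₀ + A₂P + A₂Q`, where `N₀` is the span of the `(Y∂x)^k` (`k ≥ 1`), the
`(Y∂x)^k (Y∂y)^l` (`k, l ≥ 1`, `k + l ≤ m−2`) and the `(Y∂y)^l (X∂y)^k`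
(`0 ≤ l ≤ m−2`, `k ≥ 0`). -/
theorem stmt11 (m : ℕ) (hm : 2 ≤ m) (b : ℂ) (β : ℕ → ℂ) (c : ℕ → ℂ)
    (hc0 : ∀ j, 3 ≤ j → j ≤ m → c j ≠ 0)
    (hcne : ∀ j j', 3 ≤ j → j ≤ m → 3 ≤ j' → j' ≤ m → j ≠ j' → c j ≠ c j')
    (P Q : A2)
    (hP : P = wX * wDx + wY * wDy - algebraMap ℂ A2 b)
    (hQ : Q = ((List.range' 2 (m - 1)).map (mulForm c)).prod * wDy -
      ∑ i ∈ Finset.Icc 2 m, β i • (((List.range' 2 (m - 1)).filter (· ≠ i)).map (mulForm c)).prod)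
    (N₀ : Submodule ℂ A2)
    (hN₀ : N₀ = Submodule.span ℂ
      ({a : A2 | ∃ k : ℕ, 1 ≤ k ∧ a = (wY * wDx) ^ k} ∪
       {a : A2 | ∃ k l : ℕ, 1 ≤ k ∧ 1 ≤ l ∧ k + l ≤ m - 2 ∧
          a = (wY * wDx) ^ k * (wY * wDy) ^ l} ∪
       {a : A2 | ∃ l k : ℕ, l ≤ m - 2 ∧ a = (wY * wDy) ^ l * (wX * wDy) ^ k}))
    (T : A2) (hT : T * (wX * wDx + wY * wDy) = (wX * wDx + wY * wDy) * T) :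
    ∃ u ∈ N₀, ∃ v ∈ Ideal.span {P, Q}, T = u + v := by
  subst hP hQ hN₀
  obtain ⟨d, rfl⟩ := Nat.exists_eq_add_of_le' hm
  exact stmt11_general adjoin_weylA2_eq_top b (hasLead_prod_mul_wDy_sub_sum (d + 2) c β) hT
end

section
/- Let m ≥ 2, let c₃,…,c_m be pairwise distinct nonzero complex numbers, set α₂ = y and αⱼ = cⱼx + y for 3 ≤ j ≤ m, and let β̃ ∈ ℂ^m with β̃₁ ≠ −1. In A₂ define P = X∂x + Y∂y − |β̃| (|β̃| = Σᵢβ̃ᵢ) and Q = (Π_{j=2}^m Aⱼ)∂y − Σ_{i=2}^m β̃ᵢ Π_{j=2, j≠i}^m Aⱼ, where Aⱼ is multiplication by αⱼ. Then the left ideals satisfy A₂X + A₂P + A₂Q = A₂X + A₂(Y∂y − (|β̃|+1)) + A₂Y^{m−2}. -/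
set_option synthInstance.maxHeartbeats 1000000
set_option maxHeartbeats 1000000

open MvPolynomial

/-!
Everything happens modulo the left ideal `A₂X`, whose congruences may be multiplied on the left by
anything and on the right by whatever commutes with `X`. There each `Aⱼ` becomes `Y`, so with
`T = Y∂y − (|β̃| + 1)` one gets `P ≡ T`, because `X∂x = ∂xX − 1`, and
`Q ≡ Y^(m−1)∂y − (β̃₂ + ⋯ + β̃ₘ)Y^(m−2) = Y^(m−2)T + (β̃₁ + 1)Y^(m−2)`.
Since `β̃₁ + 1` is a unit, `P` and `Q` may be traded for `T` and `Y^(m−2)`.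
-/

theorem length_filter_ne_add_one {α : Type*} [DecidableEq α] {l : List α} (hl : l.Nodup) {a : α}
    (ha : a ∈ l) : (l.filter (· ≠ a)).length + 1 = l.length := by
  have hfilter : l.filter (· ≠ a) = l.erase a := by
    rw [hl.erase_eq_filter]
    exact List.filter_congr fun b _ ↦ by grind
  rw [hfilter, List.length_erase_add_one ha]

section ModuloSpan

variable {R : Type*} [Ring R] {x y : R}

theorem mul_right_smodEq_of_commute {a b d : R} (h : a ≡ b [SMOD Ideal.span {x}])
    (hd : Commute x d) : a * d ≡ b * d [SMOD Ideal.span {x}] := by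
  rw [SModEq.sub_mem, Ideal.mem_span_singleton'] at h ⊢
  obtain ⟨q, hq⟩ := h
  exact ⟨q * d, by rw [← sub_mul, ← hq, mul_assoc, mul_assoc, hd.eq]⟩

theorem list_prod_smodEq_pow_length (hxy : Commute x y) {l : List R}
    (hl : ∀ a ∈ l, a ≡ y [SMOD Ideal.span {x}]) : l.prod ≡ y ^ l.length [SMOD Ideal.span {x}] := by
  induction l with
  | nil => simp
  | cons a l ih =>
    rw [List.forall_mem_cons] at hl
    rw [List.prod_cons, List.length_cons, pow_succ']
    calc
      a * l.prod ≡ a * y ^ l.length [SMOD Ideal.span {x}] := (ih hl.2).smul a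
      _ ≡ y * y ^ l.length [SMOD Ideal.span {x}] :=
        mul_right_smodEq_of_commute hl.1 (hxy.pow_right _)

variable {K : Type*} [CommRing K] [Algebra K R]

theorem mul_add_sub_algebraMap_smodEq {dx : R} (hdx : dx * x = x * dx + 1) (e : R) (s : K) :
    x * dx + e - algebraMap K R s ≡ e - algebraMap K R (s + 1) [SMOD Ideal.span {x}] := by
  rw [SModEq.sub_mem, Ideal.mem_span_singleton']
  refine ⟨dx, ?_⟩
  rw [hdx, map_add, map_one]
  abel

theorem prod_mul_sub_sum_smul_prod_smodEq {ι : Type*} [DecidableEq ι] {d : R} {a : ι → R}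
    (hxy : Commute x y) (hxd : Commute x d) {l : List ι} (hl : l.Nodup)
    (ha : ∀ j ∈ l, a j ≡ y [SMOD Ideal.span {x}]) (β : ι → K) :
    (l.map a).prod * d - ∑ i ∈ l.toFinset, β i • ((l.filter (· ≠ i)).map a).prod ≡
      y ^ l.length * d - (∑ i ∈ l.toFinset, β i) • y ^ (l.length - 1) [SMOD Ideal.span {x}] := by
  have hprod : ∀ l' ⊆ l, (l'.map a).prod ≡ y ^ l'.length [SMOD Ideal.span {x}] := fun l' hl' ↦ by
    rw [← List.length_map a]
    exact list_prod_smodEq_pow_length hxy (List.forall_mem_map.2 fun j hj ↦ ha j (hl' hj))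
  rw [Finset.sum_smul]
  refine (mul_right_smodEq_of_commute (hprod l (List.Subset.refl l)) hxd).sub
    (SModEq.sum fun i hi ↦ ?_)
  rw [← length_filter_ne_add_one hl (List.mem_toFinset.1 hi), Nat.add_sub_cancel,
    Algebra.smul_def, Algebra.smul_def]
  exact (hprod _ (List.filter_subset_self l)).smul _

theorem span_triple_eq_of_smodEq {p q t v w : R} {k : K} (hk : IsUnit k)
    (hp : p ≡ t [SMOD Ideal.span {x}]) (hq : q ≡ v * t + k • w [SMOD Ideal.span {x}]) :
    Ideal.span {x, p, q} = Ideal.span {x, t, w} := by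
  refine eq_of_forall_ge_iff fun J ↦ ?_
  simp only [Ideal.span_le, Set.insert_subset_iff, Set.singleton_subset_iff, SetLike.mem_coe]
  refine and_congr_right fun hx ↦ ?_
  have mem_iff_mem {a b : R} (h : a ≡ b [SMOD Ideal.span {x}]) : a ∈ J ↔ b ∈ J := by
    have hsub : a - b ∈ J := (Ideal.span_singleton_le_iff_mem J).2 hx (SModEq.sub_mem.1 h)
    exact ⟨fun ha ↦ (J.sub_mem_iff_right ha).1 hsub, fun hb ↦ (J.sub_mem_iff_left hb).1 hsub⟩
  rw [mem_iff_mem hp, mem_iff_mem hq]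
  refine and_congr_right fun ht ↦ ?_
  rw [J.add_mem_iff_right (J.mul_mem_left v ht)]
  exact (J.restrictScalars K).smul_mem_iff_of_isUnit hk

theorem stmt13_general {dx dy : R} (hxy : Commute x y) (hxdy : Commute x dy)
    (hdx : dx * x = x * dx + 1) {m : ℕ} (hm : 2 ≤ m) {a : ℕ → R}
    (ha : ∀ j ∈ List.range' 2 (m - 1), ∃ q, a j = q * x + y) {β : ℕ → K}
    (hβ : IsUnit (β 1 + 1)) :
    Ideal.span {x, x * dx + y * dy - algebraMap K R (∑ i ∈ Finset.Icc 1 m, β i),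
        ((List.range' 2 (m - 1)).map a).prod * dy -
          ∑ i ∈ Finset.Icc 2 m, β i • (((List.range' 2 (m - 1)).filter (· ≠ i)).map a).prod} =
      Ideal.span {x, y * dy - algebraMap K R ((∑ i ∈ Finset.Icc 1 m, β i) + 1),
        y ^ (m - 2)} := by
  obtain ⟨n, rfl⟩ := Nat.exists_eq_add_of_le' hm
  have hindex : (List.range' 2 (n + 1)).toFinset = Finset.Icc 2 (n + 2) := by
    ext i
    simp only [List.mem_toFinset, List.mem_range'_1, Finset.mem_Icc]
    omega
  have hsum : ∑ i ∈ Finset.Icc 1 (n + 2), β i = β 1 + ∑ i ∈ Finset.Icc 2 (n + 2), β i :=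
    (Finset.add_sum_Ioc_eq_sum_Icc (by omega)).symm
  have hforms : ∀ j ∈ List.range' 2 (n + 1), a j ≡ y [SMOD Ideal.span {x}] := fun j hj ↦ by
    obtain ⟨q, hq⟩ := ha j hj
    rw [SModEq.sub_mem, Ideal.mem_span_singleton', hq, add_sub_cancel_right]
    exact ⟨q, rfl⟩
  have hQ := prod_mul_sub_sum_smul_prod_smodEq hxy hxdy List.nodup_range' hforms β
  have hsplit : y ^ (n + 1) * dy - (∑ i ∈ Finset.Icc 2 (n + 2), β i) • y ^ n =
      y ^ n * (y * dy - algebraMap K R ((∑ i ∈ Finset.Icc 1 (n + 2), β i) + 1)) +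
        (β 1 + 1) • y ^ n := by
    rw [hsum, mul_sub, ← Algebra.commutes, ← Algebra.smul_def, ← mul_assoc, ← pow_succ]
    module
  rw [hindex, List.length_range', Nat.add_sub_cancel, hsplit] at hQ
  exact span_triple_eq_of_smodEq hβ (mul_add_sub_algebraMap_smodEq hdx _ _) hQ

end ModuloSpan

theorem commute_wX_wY : Commute wX wY :=
  Subtype.ext <| LinearMap.ext fun p ↦ by simp [wX, wY, Xop, Yop, mul_left_comm]

theorem commute_wX_wDy : Commute wX wDy :=
  Subtype.ext <| LinearMap.ext fun p ↦ by simp [wX, wDy, Xop, Dyop, pderiv_X]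

theorem wDx_mul_wX : wDx * wX = wX * wDx + 1 :=
  Subtype.ext <| LinearMap.ext fun p ↦ by simp [wX, wDx, Xop, Dxop, pderiv_X]

theorem exists_mulForm_eq_mul_wX_add_wY (c : ℕ → ℂ) (j : ℕ) :
    ∃ q : A2, mulForm c j = q * wX + wY := by
  unfold mulForm
  split_ifs
  · exact ⟨0, by simp⟩
  · exact ⟨c j • 1, by simp⟩

/-- with `α₂ = y`, `αⱼ = cⱼx + y` (`3 ≤ j ≤ m`, the `cⱼ` pairwise distinct and
nonzero), `β̃ ∈ ℂ^m` with `β̃₁ ≠ −1`, `P = X∂x + Y∂y − |β̃|` and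
`Q = (Π_{j=2}^m Aⱼ)∂y − Σ_{i=2}^m β̃ᵢ Π_{j=2,j≠i}^m Aⱼ`, the left ideals satisfy
`A₂X + A₂P + A₂Q = A₂X + A₂(Y∂y − (|β̃|+1)) + A₂Y^{m−2}`. -/
theorem stmt13 (m : ℕ) (hm : 2 ≤ m) (c : ℕ → ℂ)
    (hc0 : ∀ j, 3 ≤ j → j ≤ m → c j ≠ 0)
    (hcne : ∀ j j', 3 ≤ j → j ≤ m → 3 ≤ j' → j' ≤ m → j ≠ j' → c j ≠ c j')
    (tβ : ℕ → ℂ) (htβ1 : tβ 1 ≠ -1)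
    (P Q : A2)
    (hP : P = wX * wDx + wY * wDy - algebraMap ℂ A2 (∑ i ∈ Finset.Icc 1 m, tβ i))
    (hQ : Q = ((List.range' 2 (m - 1)).map (mulForm c)).prod * wDy -
      ∑ i ∈ Finset.Icc 2 m, tβ i • (((List.range' 2 (m - 1)).filter (· ≠ i)).map (mulForm c)).prod) :
    Ideal.span {wX, P, Q} =
      Ideal.span {wX, wY * wDy - algebraMap ℂ A2 ((∑ i ∈ Finset.Icc 1 m, tβ i) + 1),
        wY ^ (m - 2)} := by
  subst hP hQ
  exact stmt13_general (R := A2) (a := mulForm c) commute_wX_wY commute_wX_wDy wDx_mul_wX hm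
    (fun j _ ↦ exists_mulForm_eq_mul_wX_add_wY c j)
    (by rwa [isUnit_iff_ne_zero, Ne, add_eq_zero_iff_eq_neg])
end

section
/- Let m ≥ 2, let c₃,…,c_m be pairwise distinct nonzero complex numbers, set α₂ = y and αⱼ = cⱼx + y for 3 ≤ j ≤ m, and let β̃ ∈ ℂ^m with β̃ᵢ ∉ ℤ for every i. In A₂ define P = X∂x + Y∂y − |β̃| (|β̃| = Σᵢβ̃ᵢ) and Q = (Π_{j=2}^m Aⱼ)∂y − Σ_{i=2}^m β̃ᵢ Π_{j=2, j≠i}^m Aⱼ, where Aⱼ is multiplication by αⱼ. Let I = A₂X + A₂P + A₂Q. Then I is a proper left ideal of A₂ if and only if −(m−2) ≤ |β̃| + 1 ≤ −1 (i.e. |β̃| is an integer in {−(m−1),…,−2}), and in that case I is a maximal left ideal of A₂ (so A₂/I is a nonzero simple A₂-module). -/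
set_option synthInstance.maxHeartbeats 1000000
set_option maxHeartbeats 1000000

open MvPolynomial

/-!
Modulo `X` every product of the forms `αⱼ` is a power of `Y`, and `X∂x = ∂xX - 1`. Since
`β̃₁ ≠ -1`, this turns `I` into the left ideal generated by `X`, `Y∂y - μ` and `Yⁿ`, where
`μ = |β̃| + 1` and `n = m - 2`. Write `L` for the left ideal `A₂X + A₂Y`; the quotient `A₂ / L` is
spanned by the derivatives of a delta function `δ` at the origin.

* If `μ ∉ {-1, …, -n}`, then `∂y Yʲ⁺¹ ≡ (μ + j + 1) Yʲ` modulo `Y∂y - μ` descends from `Yⁿ` to `1`.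
* If `μ = -(k + 1)` with `k < n`, then `I` is the annihilator of `∂yᵏ δ`: the generators kill it,
  and conversely `r ∂yᵏ ∈ L` gives `r ∂yᵏ Yᵏ ∈ I`, where `∂yᵏ Yᵏ` is a nonzero constant modulo `I`.

So everything reduces to `L` being maximal. Writing operators with all derivatives on the left,
commutation with `X, Y, ∂x, ∂y` acts on normal forms as partial differentiation, and a nonzero space
of polynomials stable under partial differentiation contains `1`. This gives both the uniqueness of
normal forms (hence `1 ∉ L`) and the simplicity of `A₂ / L`.
-/

section PolynomialDerivatives

variable {σ A : Type*}

theorem eq_C_of_forall_pderiv_eq_zero [CommRing A] [NoZeroDivisors A] [CharZero A]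
    {f : MvPolynomial σ A} (hf : ∀ i, pderiv i f = 0) : f = C (coeff 0 f) := by
  classical
  ext e
  rw [coeff_C]
  split_ifs with he
  · rw [he]
  obtain ⟨i, hi⟩ := Finsupp.ne_iff.1 (Ne.symm he)
  have hcoeff := congrArg (coeff (e - Finsupp.single i 1)) (hf i)
  rw [coeff_pderiv, tsub_add_cancel_of_le (Finsupp.single_le_iff.2 (Nat.one_le_iff_ne_zero.2 hi)),
    coeff_zero] at hcoeff
  exact (mul_eq_zero.1 hcoeff).resolve_right (Nat.cast_add_one_ne_zero _)

theorem totalDegree_pderiv_lt [CommSemiring A] {f : MvPolynomial σ A} {i : σ}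
    (hf : pderiv i f ≠ 0) : (pderiv i f).totalDegree < f.totalDegree := by
  have hlt (e : σ →₀ ℕ) (he : e ∈ (pderiv i f).support) : e.degree < f.totalDegree := by
    rw [mem_support_iff, coeff_pderiv] at he
    have := le_totalDegree (mem_support_iff.2 (left_ne_zero_of_mul he))
    rw [Finsupp.sum, ← Finsupp.degree_apply, map_add, Finsupp.degree_single] at this
    omega
  obtain ⟨e, he⟩ := support_nonempty.2 hf
  exact (Finset.sup_lt_iff (Nat.zero_lt_of_lt (hlt e he))).2 hlt

theorem one_mem_of_pderiv_mem {K : Type*} [Field K] [CharZero K]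
    {V : Submodule K (MvPolynomial σ K)} (hV : ∀ i, ∀ f ∈ V, pderiv i f ∈ V) (hV0 : V ≠ ⊥) :
    1 ∈ V := by
  suffices ∀ d, ∀ f ∈ V, f ≠ 0 → f.totalDegree = d → 1 ∈ V by
    obtain ⟨f, hf, hf0⟩ := V.exists_mem_ne_zero_of_ne_bot hV0
    exact this _ f hf hf0 rfl
  intro d
  induction d using Nat.strong_induction_on with
  | _ d ih =>
  rintro f hf hf0 rfl
  by_cases hder : ∀ i, pderiv i f = 0
  · have hfC := eq_C_of_forall_pderiv_eq_zero hder
    have hc : coeff 0 f ≠ 0 := fun hc => hf0 (by rw [hfC, hc, C_0])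
    have hone : (1 : MvPolynomial σ K) = (coeff 0 f)⁻¹ • f := by
      conv_rhs => rw [hfC, coeff_zero_C, smul_eq_C_mul, ← C_mul, inv_mul_cancel₀ hc, C_1]
    exact hone ▸ V.smul_mem _ hf
  · obtain ⟨i, hi⟩ := not_forall.1 hder
    exact ih _ (totalDegree_pderiv_lt hi) _ (hV i f hf) hi rfl

end PolynomialDerivatives

section CommutingEvaluation

variable {ι K R : Type*} [CommSemiring K] [Semiring R] [Algebra K R] {a : ι → R}

open scoped IsMulCommutative in
/-- Evaluation of polynomials at a family of pairwise commuting elements of an algebra that need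
not be commutative; `MvPolynomial.aeval` requires a commutative target, so it is applied in the
subalgebra generated by the family. -/
noncomputable def aevalOfCommute (ha : ∀ i j, Commute (a i) (a j)) : MvPolynomial ι K →ₐ[K] R :=
  have : IsMulCommutative (Algebra.adjoin K (Set.range a)) :=
    Algebra.isMulCommutative_adjoin K <| by
      rintro _ ⟨i, rfl⟩ _ ⟨j, rfl⟩
      exact ha i j
  (Algebra.adjoin K (Set.range a)).val.comp
    (aeval fun i => ⟨a i, Algebra.subset_adjoin (Set.mem_range_self i)⟩)

@[simp]
theorem aevalOfCommute_X (ha : ∀ i j, Commute (a i) (a j)) (i : ι) :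
    aevalOfCommute ha (X i : MvPolynomial ι K) = a i := by
  simp [aevalOfCommute]

end CommutingEvaluation

/-- The families `x` and `p` of elements of a ring satisfy the defining relations of the Weyl
algebra, with `p i` in the role of the partial derivative with respect to `x i`. -/
structure IsWeylPair {σ R : Type*} [Ring R] (x p : σ → R) : Prop where
  commute_x (i j : σ) : Commute (x i) (x j)
  commute_p (i j : σ) : Commute (p i) (p j)
  commute_p_x {i j : σ} (hij : i ≠ j) : Commute (p i) (x j)
  p_mul_x (i : σ) : p i * x i = x i * p i + 1

namespace IsWeylPair

section NormalOrder

variable {σ R : Type*} [Ring R] {x p : σ → R} (K : Type*) [CommRing K] [Algebra K R]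

/-- The linear map from polynomials in commuting variables `ξ i = X (inl i)` and `z i = X (inr i)`
to the ring which replaces `ξ i` by `p i` and `z i` by `x i`, writing every `p` to the left of every
`x`. It is encoded through left multiplications by `p i` and right multiplications by `x i`, which
commute with each other, applied to `1`. -/
noncomputable def normalOrder (h : IsWeylPair x p) : MvPolynomial (σ ⊕ σ) K →ₗ[K] R :=
  LinearMap.applyₗ (1 : R) ∘ₗ AlgHom.toLinearMap (aevalOfCommute (K := K)
    (a := Sum.elim (fun i => LinearMap.mulLeft K (p i)) fun i => LinearMap.mulRight K (x i)) <| by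
      rintro (i | i) (j | j)
      · exact LinearMap.ext fun r => by simp [← mul_assoc, (h.commute_p i j).eq]
      · exact LinearMap.commute_mulLeft_right _ _
      · exact (LinearMap.commute_mulLeft_right _ _).symm
      · exact LinearMap.ext fun r => by simp [mul_assoc, (h.commute_x i j).eq])

variable {K} (h : IsWeylPair x p)

@[simp]
theorem normalOrder_one : h.normalOrder K 1 = 1 := by
  simp [normalOrder]

@[simp]
theorem normalOrder_C (c : K) : h.normalOrder K (C c) = algebraMap K R c := by
  rw [← mul_one (C c), ← smul_eq_C_mul, map_smul, normalOrder_one, Algebra.algebraMap_eq_smul_one]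

theorem normalOrder_mul_X_inl (F : MvPolynomial (σ ⊕ σ) K) (i : σ) :
    h.normalOrder K (F * X (.inl i)) = p i * h.normalOrder K F := by
  simp [normalOrder, mul_comm F, aevalOfCommute_X]

theorem normalOrder_mul_X_inr (F : MvPolynomial (σ ⊕ σ) K) (i : σ) :
    h.normalOrder K (F * X (.inr i)) = h.normalOrder K F * x i := by
  simp [normalOrder, mul_comm F, aevalOfCommute_X]

theorem normalOrder_pderiv_inl (i : σ) (F : MvPolynomial (σ ⊕ σ) K) :
    h.normalOrder K (pderiv (.inl i) F) =
      h.normalOrder K F * x i - x i * h.normalOrder K F := by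
  induction F using MvPolynomial.induction_on with
  | C c => simp [normalOrder_C, Algebra.commutes]
  | add F G hF hG => simp only [map_add, hF, hG, add_mul, mul_add]; abel
  | mul_X F j hF =>
    rw [pderiv_mul, map_add]
    obtain j | j := j
    · rw [normalOrder_mul_X_inl, normalOrder_mul_X_inl, hF]
      obtain rfl | hij := eq_or_ne j i
      · rw [pderiv_X_self, mul_one, ← mul_assoc (x j), ← sub_eq_of_eq_add (h.p_mul_x j)]
        noncomm_ring
      · rw [pderiv_X_of_ne (by simpa using hij), mul_zero, map_zero, add_zero, ← mul_assoc (x i),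
          ← (h.commute_p_x hij).eq]
        noncomm_ring
    · rw [pderiv_X_of_ne Sum.inr_ne_inl, mul_zero, map_zero, add_zero, normalOrder_mul_X_inr,
        normalOrder_mul_X_inr, hF, mul_assoc _ (x j), (h.commute_x j i).eq]
      noncomm_ring

theorem normalOrder_pderiv_inr (i : σ) (F : MvPolynomial (σ ⊕ σ) K) :
    h.normalOrder K (pderiv (.inr i) F) =
      p i * h.normalOrder K F - h.normalOrder K F * p i := by
  induction F using MvPolynomial.induction_on with
  | C c => simp [normalOrder_C, Algebra.commutes]
  | add F G hF hG => simp only [map_add, hF, hG, add_mul, mul_add]; abel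
  | mul_X F j hF =>
    rw [pderiv_mul, map_add]
    obtain j | j := j
    · rw [pderiv_X_of_ne Sum.inl_ne_inr, mul_zero, map_zero, add_zero, normalOrder_mul_X_inl,
        normalOrder_mul_X_inl, hF, ← mul_assoc (p i), (h.commute_p i j).eq]
      noncomm_ring
    · rw [normalOrder_mul_X_inr, normalOrder_mul_X_inr, hF]
      obtain rfl | hij := eq_or_ne i j
      · rw [pderiv_X_self, mul_one, mul_assoc _ (x i) (p i), ← sub_eq_of_eq_add (h.p_mul_x i)]
        noncomm_ring
      · rw [pderiv_X_of_ne (by simpa using hij.symm), mul_zero, map_zero, add_zero,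
          mul_assoc _ (x j), ← (h.commute_p_x hij).eq]
        noncomm_ring

theorem normalOrder_surjective (hgen : Algebra.adjoin K (Set.range x ∪ Set.range p) = ⊤) :
    Function.Surjective (h.normalOrder K) := by
  suffices ∀ (r : R) (F : MvPolynomial (σ ⊕ σ) K), ∃ G, h.normalOrder K G = h.normalOrder K F * r by
    intro r
    obtain ⟨G, hG⟩ := this r 1
    exact ⟨G, by simpa using hG⟩
  intro r
  have hr : r ∈ Algebra.adjoin K (Set.range x ∪ Set.range p) := hgen ▸ Algebra.mem_top
  induction hr using Algebra.adjoin_induction with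
  | mem r hr =>
    intro F
    obtain ⟨i, rfl⟩ | ⟨i, rfl⟩ := hr
    · refine ⟨F * X (.inr i), ?_⟩
      rw [normalOrder_mul_X_inr]
    · refine ⟨F * X (.inl i) - pderiv (.inr i) F, ?_⟩
      rw [map_sub (h.normalOrder K), normalOrder_mul_X_inl, normalOrder_pderiv_inr, sub_sub_cancel]
  | algebraMap c => exact fun F => ⟨c • F, by rw [map_smul, Algebra.smul_def, Algebra.commutes]⟩
  | add r s _ _ hr hs =>
    intro F
    obtain ⟨G, hG⟩ := hr F
    obtain ⟨H, hH⟩ := hs F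
    exact ⟨G + H, by rw [map_add, hG, hH, mul_add]⟩
  | mul r s _ _ hr hs =>
    intro F
    obtain ⟨G, hG⟩ := hr F
    obtain ⟨H, hH⟩ := hs G
    exact ⟨H, by rw [hH, hG, mul_assoc]⟩

theorem exists_normalOrder_sub_normalOrder_rename_mem (h : IsWeylPair x p)
    (F : MvPolynomial (σ ⊕ σ) K) : ∃ f : MvPolynomial σ K,
      h.normalOrder K F - h.normalOrder K (rename .inl f) ∈ Ideal.span (Set.range x) := by
  induction F using MvPolynomial.induction_on with
  | C c => exact ⟨C c, by simp⟩
  | add F G hF hG =>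
    obtain ⟨f, hf⟩ := hF
    obtain ⟨g, hg⟩ := hG
    refine ⟨f + g, ?_⟩
    simpa only [map_add, add_sub_add_comm] using add_mem hf hg
  | mul_X F i hF =>
    obtain i | i := i
    · obtain ⟨f, hf⟩ := hF
      refine ⟨f * X i, ?_⟩
      rw [map_mul (rename _), rename_X, normalOrder_mul_X_inl, normalOrder_mul_X_inl, ← mul_sub]
      exact Ideal.mul_mem_left _ _ hf
    · refine ⟨0, ?_⟩
      rw [map_zero, map_zero, sub_zero, normalOrder_mul_X_inr]
      exact Ideal.mul_mem_left _ _ (Ideal.subset_span (Set.mem_range_self i))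

end NormalOrder

section Field

variable {σ R : Type*} [Ring R] {x p : σ → R} {K : Type*} [Field K] [CharZero K] [Algebra K R]

theorem normalOrder_injective [Nontrivial R] (h : IsWeylPair x p) :
    Function.Injective (h.normalOrder K) := by
  refine LinearMap.ker_eq_bot.1 (by_contra fun hker => one_ne_zero (α := R) ?_)
  rw [← h.normalOrder_one (K := K)]
  refine one_mem_of_pderiv_mem (V := LinearMap.ker (h.normalOrder K)) ?_ hker
  rintro (i | i) F hF
  · rw [LinearMap.mem_ker] at hF ⊢
    rw [normalOrder_pderiv_inl, hF, zero_mul, mul_zero, sub_zero]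
  · rw [LinearMap.mem_ker] at hF ⊢
    rw [normalOrder_pderiv_inr, hF, zero_mul, mul_zero, sub_zero]

theorem span_range_ne_top [Nontrivial R] (h : IsWeylPair x p)
    (hgen : Algebra.adjoin K (Set.range x ∪ Set.range p) = ⊤) :
    Ideal.span (Set.range x) ≠ ⊤ := by
  intro htop
  obtain ⟨r, hr⟩ := Finsupp.mem_span_range_iff_exists_finsupp.1
    (show (1 : R) ∈ Ideal.span (Set.range x) from htop ▸ Submodule.mem_top)
  choose F hF using fun i => h.normalOrder_surjective hgen (r i)
  have hone : ∑ i ∈ r.support, F i * X (.inr i) = 1 := by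
    refine h.normalOrder_injective (K := K) ?_
    simp only [map_sum, normalOrder_mul_X_inr, hF, normalOrder_one]
    exact hr
  simpa using congrArg constantCoeff hone

theorem one_mem_of_normalOrder_rename_mem (h : IsWeylPair x p) {J : Ideal R}
    (hJ : Ideal.span (Set.range x) ≤ J) {f : MvPolynomial σ K} (hf0 : f ≠ 0)
    (hf : h.normalOrder K (rename .inl f) ∈ J) : 1 ∈ J := by
  let V : Submodule K (MvPolynomial σ K) :=
    (J.restrictScalars K).comap (h.normalOrder K ∘ₗ (rename Sum.inl).toLinearMap)
  have hV : ∀ i, ∀ g ∈ V, pderiv i g ∈ V := by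
    intro i g hg
    have hx : x i ∈ J := hJ (Ideal.subset_span (Set.mem_range_self i))
    change h.normalOrder K (rename Sum.inl (pderiv i g)) ∈ J
    rw [← pderiv_rename Sum.inl_injective, normalOrder_pderiv_inl]
    exact J.sub_mem (J.mul_mem_left _ hx) (J.mul_mem_left _ hg)
  have hone : (1 : MvPolynomial σ K) ∈ V := one_mem_of_pderiv_mem hV (V.ne_bot_iff.2 ⟨f, hf, hf0⟩)
  change h.normalOrder K (rename Sum.inl 1) ∈ J at hone
  rwa [map_one, normalOrder_one] at hone

theorem isMaximal_span_range [Nontrivial R] (h : IsWeylPair x p)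
    (hgen : Algebra.adjoin K (Set.range x ∪ Set.range p) = ⊤) :
    (Ideal.span (Set.range x)).IsMaximal := by
  refine ⟨h.span_range_ne_top hgen, fun J hJ => (Ideal.eq_top_iff_one J).2 ?_⟩
  obtain ⟨r, hrJ, hrL⟩ := SetLike.exists_of_lt hJ
  obtain ⟨F, rfl⟩ := h.normalOrder_surjective hgen r
  obtain ⟨f, hf⟩ := h.exists_normalOrder_sub_normalOrder_rename_mem F
  refine h.one_mem_of_normalOrder_rename_mem hJ.le (f := f) ?_ ?_
  · rintro rfl
    exact hrL (by simpa using hf)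
  · simpa using J.sub_mem hrJ (hJ.le hf)

end Field
end IsWeylPair

theorem mul_pow_succ_of_mul_eq_mul_add_one {R : Type*} [Semiring R] {a b : R}
    (h : a * b = b * a + 1) (n : ℕ) : a * b ^ (n + 1) = b ^ (n + 1) * a + (n + 1) • b ^ n := by
  induction n with
  | zero => simpa using h
  | succ n ih =>
    rw [pow_succ b (n + 1), ← mul_assoc, ih, add_mul, mul_assoc, h, smul_mul_assoc, ← pow_succ,
      mul_add, mul_one, ← mul_assoc, add_assoc, ← succ_nsmul']

namespace IsWeylPair

variable {σ R : Type*} [Ring R] {x p : σ → R}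

theorem x_mul_p_pow_succ (h : IsWeylPair x p) (i : σ) (k : ℕ) :
    x i * p i ^ (k + 1) = p i ^ (k + 1) * x i - (k + 1) • p i ^ k := by
  have hneg : -x i * p i = p i * -x i + 1 := by
    rw [mul_neg, h.p_mul_x]
    noncomm_ring
  have hpow := mul_pow_succ_of_mul_eq_mul_add_one hneg k
  rw [mul_neg, neg_mul] at hpow
  rw [neg_eq_iff_eq_neg.1 hpow, neg_add, neg_neg, sub_eq_add_neg]

theorem x_pow_mul_p_pow_mem_span_range (h : IsWeylPair x p) (i : σ) {j k : ℕ} (hkj : k < j) :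
    x i ^ j * p i ^ k ∈ Ideal.span (Set.range x) := by
  have hx : x i ∈ Ideal.span (Set.range x) := Ideal.subset_span (Set.mem_range_self i)
  obtain ⟨j, rfl⟩ := Nat.exists_eq_succ_of_ne_zero (Nat.ne_zero_of_lt hkj)
  induction k generalizing j with
  | zero =>
    rw [pow_zero, mul_one, pow_succ]
    exact Ideal.mul_mem_left _ _ hx
  | succ k ih =>
    obtain ⟨j, rfl⟩ := Nat.exists_eq_succ_of_ne_zero (show j ≠ 0 by omega)
    rw [pow_succ, mul_assoc, h.x_mul_p_pow_succ, mul_sub, mul_smul_comm, ← mul_assoc]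
    exact sub_mem (Ideal.mul_mem_left _ _ hx) (nsmul_mem (ih _ (by omega)) _)

theorem p_pow_notMem_span_range (K : Type*) [Field K] [CharZero K] [Algebra K R]
    (h : IsWeylPair x p) (hL : Ideal.span (Set.range x) ≠ ⊤) (i : σ) (k : ℕ) :
    p i ^ k ∉ Ideal.span (Set.range x) := by
  have hx : x i ∈ Ideal.span (Set.range x) := Ideal.subset_span (Set.mem_range_self i)
  induction k with
  | zero => rwa [pow_zero, ← Ideal.ne_top_iff_one]
  | succ k ih =>
    intro hk
    refine ih ((Submodule.smul_mem_iff _ (Nat.cast_ne_zero (R := K).2 k.succ_ne_zero)).1 ?_)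
    rw [Nat.cast_smul_eq_nsmul, ← sub_sub_self (p i ^ (k + 1) * x i) (_ • _), ← h.x_mul_p_pow_succ]
    exact sub_mem (Ideal.mul_mem_left _ _ hx) (Ideal.mul_mem_left _ _ hk)

end IsWeylPair

theorem mul_pow_mem_of_mul_sub_algebraMap_mem {K R : Type*} [Field K] [Ring R] [Algebra K R]
    {x p : R} (hpx : p * x = x * p + 1) {μ : K} {J : Ideal R} (hJ : x * p - algebraMap K R μ ∈ J)
    {a : R} {i l : ℕ} (hμ : ∀ j < i, μ + (l + j + 1) ≠ 0) (ha : a * (p ^ i * x ^ (l + i)) ∈ J) :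
    a * x ^ l ∈ J := by
  induction i with
  | zero => simpa using ha
  | succ i ih =>
    refine ih (fun j hj => hμ j (by omega)) ((J.smul_mem_iff (hμ i i.lt_succ_self)).1 ?_)
    have hred : p * x ^ (l + i + 1) =
        x ^ (l + i) * (x * p - algebraMap K R μ) + (μ + (l + i + 1)) • x ^ (l + i) := by
      rw [mul_pow_succ_of_mul_eq_mul_add_one hpx, pow_succ, mul_assoc, mul_sub,
        ← Algebra.commutes, ← Algebra.smul_def, add_smul μ, ← add_assoc _ (μ • _), sub_add_cancel,
        ← Nat.cast_add, ← Nat.cast_add_one, Nat.cast_smul_eq_nsmul]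
    rw [pow_succ, mul_assoc (p ^ i), ← add_assoc, hred, mul_add, mul_add,
      J.add_mem_iff_right (J.mul_mem_left _ (J.mul_mem_left _ (J.mul_mem_left _ hJ)))] at ha
    simpa only [mul_smul_comm] using ha

/-- The left ideal generated by `x j` for `j ≠ i`, by the shifted Euler operator `x i * p i - μ` and
by `x i ^ n`. It describes the annihilators of the derivatives `p i ^ k` of the delta function in
the quotient by the left ideal of all `x j`. -/
def eulerIdeal {σ K R : Type*} [CommSemiring K] [Ring R] [Algebra K R] (x p : σ → R) (i : σ) (μ : K)
    (n : ℕ) : Ideal R :=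
  Ideal.span (x '' {i}ᶜ ∪ {x i * p i - algebraMap K R μ, x i ^ n})

section EulerIdeal

variable {σ K R : Type*} [Field K] [Ring R] [Algebra K R] {x p : σ → R} {i : σ} {μ : K} {n : ℕ}

theorem mem_eulerIdeal_of_ne {j : σ} (hj : j ≠ i) : x j ∈ eulerIdeal x p i μ n :=
  Ideal.subset_span (.inl ⟨j, hj, rfl⟩)

theorem mul_sub_algebraMap_mem_eulerIdeal :
    x i * p i - algebraMap K R μ ∈ eulerIdeal x p i μ n :=
  Ideal.subset_span (.inr (.inl rfl))

theorem pow_mem_eulerIdeal : x i ^ n ∈ eulerIdeal x p i μ n :=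
  Ideal.subset_span (.inr (.inr rfl))

theorem eulerIdeal_le_iff {J : Ideal R} : eulerIdeal x p i μ n ≤ J ↔
    (∀ j ≠ i, x j ∈ J) ∧ x i * p i - algebraMap K R μ ∈ J ∧ x i ^ n ∈ J := by
  simp only [eulerIdeal, Ideal.span_le, Set.union_subset_iff, Set.image_subset_iff,
    Set.insert_subset_iff, Set.singleton_subset_iff, SetLike.mem_coe]
  rfl

namespace IsWeylPair

theorem eulerIdeal_eq_top (h : IsWeylPair x p) (hμ : ∀ k < n, μ ≠ -(k + 1)) :
    eulerIdeal x p i μ n = ⊤ := by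
  rw [Ideal.eq_top_iff_one]
  have hpn : 1 * (p i ^ n * x i ^ (0 + n)) ∈ eulerIdeal x p i μ n := by
    rw [one_mul, zero_add]
    exact Ideal.mul_mem_left _ _ pow_mem_eulerIdeal
  simpa using mul_pow_mem_of_mul_sub_algebraMap_mem (h.p_mul_x i) mul_sub_algebraMap_mem_eulerIdeal
    (fun k hk h0 => hμ k hk (eq_neg_of_add_eq_zero_left (by simpa using h0))) hpn

variable [CharZero K]

theorem span_range_mul_x_pow_mem_eulerIdeal (h : IsWeylPair x p) {k : ℕ} (hk : k < n) {r : R}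
    (hr : r ∈ Ideal.span (Set.range x)) : r * x i ^ k ∈ eulerIdeal x p i (-(k + 1) : K) n := by
  induction hr using Submodule.span_induction with
  | zero => simp
  | add r s _ _ hr hs => rw [add_mul]; exact add_mem hr hs
  | smul a r _ hr => rw [smul_mul_assoc]; exact Submodule.smul_mem _ a hr
  | mem r hr =>
    obtain ⟨j, rfl⟩ := hr
    obtain rfl | hj := eq_or_ne j i
    · have hpn : 1 * (p j ^ (n - (k + 1)) * x j ^ (k + 1 + (n - (k + 1)))) ∈
          eulerIdeal x p j (-(k + 1) : K) n := by
        rw [one_mul, Nat.add_sub_of_le hk]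
        exact Ideal.mul_mem_left _ _ pow_mem_eulerIdeal
      rw [← pow_succ', ← one_mul (_ ^ _)]
      refine mul_pow_mem_of_mul_sub_algebraMap_mem (h.p_mul_x j) mul_sub_algebraMap_mem_eulerIdeal
        (fun l _ => ?_) hpn
      rw [Nat.cast_succ, add_assoc _ (l : K), neg_add_cancel_left]
      exact l.cast_add_one_ne_zero
    · rw [((h.commute_x j i).pow_right k).eq]
      exact Ideal.mul_mem_left _ _ (mem_eulerIdeal_of_ne hj)

theorem mem_eulerIdeal_iff (h : IsWeylPair x p) {k : ℕ} (hk : k < n) {r : R} :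
    r ∈ eulerIdeal x p i (-(k + 1) : K) n ↔ r * p i ^ k ∈ Ideal.span (Set.range x) := by
  have hx (j : σ) : x j ∈ Ideal.span (Set.range x) := Ideal.subset_span (Set.mem_range_self j)
  constructor
  · intro hr
    suffices eulerIdeal x p i (-(k + 1) : K) n ≤ Submodule.comap
        (LinearMap.toSpanSingleton R R (p i ^ k)) (Ideal.span (Set.range x)) from this hr
    refine eulerIdeal_le_iff.2 ⟨fun j hj => ?_, ?_, h.x_pow_mul_p_pow_mem_span_range i hk⟩
    · change x j * p i ^ k ∈ Ideal.span (Set.range x)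
      rw [← ((h.commute_p_x hj.symm).pow_left k).eq]
      exact Ideal.mul_mem_left _ _ (hx j)
    · have heq : (x i * p i - algebraMap K R (-(k + 1))) * p i ^ k = p i ^ (k + 1) * x i := by
        rw [sub_mul, mul_assoc, ← pow_succ', h.x_mul_p_pow_succ, ← Algebra.smul_def, neg_smul,
          sub_neg_eq_add, ← Nat.cast_succ, Nat.cast_smul_eq_nsmul, sub_add_cancel]
      change (x i * p i - algebraMap K R (-(k + 1))) * p i ^ k ∈ Ideal.span (Set.range x)
      exact heq ▸ Ideal.mul_mem_left _ _ (hx i)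
  · intro hr
    have hrx := h.span_range_mul_x_pow_mem_eulerIdeal (K := K) (i := i) hk hr
    rw [mul_assoc, ← zero_add k] at hrx
    rw [← mul_one r, ← pow_zero (x i)]
    refine mul_pow_mem_of_mul_sub_algebraMap_mem (h.p_mul_x i) mul_sub_algebraMap_mem_eulerIdeal
      (fun j hj h0 => ?_) (by simpa using hrx)
    have : j = k := by
      push_cast at h0
      exact_mod_cast (by linear_combination h0 : (j : K) = k)
    omega

variable [Nontrivial R]

theorem isMaximal_eulerIdeal (h : IsWeylPair x p)
    (hgen : Algebra.adjoin K (Set.range x ∪ Set.range p) = ⊤) {k : ℕ} (hk : k < n) :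
    (eulerIdeal x p i (-(k + 1) : K) n).IsMaximal := by
  have hL := h.isMaximal_span_range hgen
  have hsimple : IsSimpleModule R (R ⧸ Ideal.span (Set.range x)) :=
    isSimpleModule_iff_isCoatom.2 hL.out
  have hδ : (Submodule.Quotient.mk (p i ^ k) : R ⧸ Ideal.span (Set.range x)) ≠ 0 := by
    rw [Ne, Submodule.Quotient.mk_eq_zero]
    exact h.p_pow_notMem_span_range K hL.ne_top i k
  convert IsSimpleModule.ker_toSpanSingleton_isMaximal R hδ using 1
  ext r
  rw [h.mem_eulerIdeal_iff hk, LinearMap.mem_ker, LinearMap.toSpanSingleton_apply,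
    ← Submodule.Quotient.mk_smul, Submodule.Quotient.mk_eq_zero, smul_eq_mul]

theorem eulerIdeal_ne_top_iff (h : IsWeylPair x p)
    (hgen : Algebra.adjoin K (Set.range x ∪ Set.range p) = ⊤) :
    eulerIdeal x p i μ n ≠ ⊤ ↔ ∃ k < n, μ = -(k + 1) := by
  refine ⟨fun hne => ?_, ?_⟩
  · by_contra! hμ
    exact hne (h.eulerIdeal_eq_top hμ)
  · rintro ⟨k, hk, rfl⟩
    exact (h.isMaximal_eulerIdeal hgen hk).ne_top

theorem isMaximal_eulerIdeal_of_ne_top (h : IsWeylPair x p)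
    (hgen : Algebra.adjoin K (Set.range x ∪ Set.range p) = ⊤) (hne : eulerIdeal x p i μ n ≠ ⊤) :
    (eulerIdeal x p i μ n).IsMaximal := by
  obtain ⟨k, hk, rfl⟩ := (h.eulerIdeal_ne_top_iff hgen).1 hne
  exact h.isMaximal_eulerIdeal hgen hk

end IsWeylPair
end EulerIdeal

section WeylAlgebra

theorem IsWeylPair.of_comp_ringHom {σ R S : Type*} [Ring R] [Ring S] {x p : σ → R} {f : R →+* S}
    (hf : Function.Injective f) (h : IsWeylPair (f ∘ x) (f ∘ p)) : IsWeylPair x p where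
  commute_x i j := hf (by simpa using (h.commute_x i j).eq)
  commute_p i j := hf (by simpa using (h.commute_p i j).eq)
  commute_p_x hij := hf (by simpa using (h.commute_p_x hij).eq)
  p_mul_x i := hf (by simpa using h.p_mul_x i)

theorem pderiv_pderiv_comm {σ A : Type*} [CommRing A] (i j : σ) (f : MvPolynomial σ A) :
    pderiv i (pderiv j f) = pderiv j (pderiv i f) := by
  classical
  rw [← sub_eq_zero, ← Derivation.commutator_apply]
  suffices ⁅pderiv (R := A) i, pderiv j⁆ = 0 by rw [this, Derivation.zero_apply]
  refine derivation_ext fun k => ?_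
  simp [Derivation.commutator_apply, pderiv_X, Pi.single_apply, apply_ite]

theorem isWeylPair_mulLeft_pderiv (σ A : Type*) [CommRing A] :
    IsWeylPair (fun i : σ => LinearMap.mulLeft A (X i : MvPolynomial σ A))
      (fun i => (pderiv i : Derivation A (MvPolynomial σ A) (MvPolynomial σ A)).toLinearMap) where
  commute_x i j := LinearMap.ext fun f => mul_left_comm (X i) (X j) f
  commute_p i j := LinearMap.ext fun f => pderiv_pderiv_comm i j f
  commute_p_x hij := LinearMap.ext fun f => by simp [pderiv_X_of_ne hij.symm]
  p_mul_x i := LinearMap.ext fun f => by simp [mul_comm, add_comm]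

theorem isWeylPair_A2 : IsWeylPair ![wX, wY] ![wDx, wDy] := by
  refine .of_comp_ringHom (f := A2.val.toRingHom) Subtype.val_injective ?_
  convert isWeylPair_mulLeft_pderiv (Fin 2) ℂ using 1 <;> ext1 i <;> fin_cases i <;> rfl

theorem adjoin_generators_A2_eq_top :
    Algebra.adjoin ℂ (Set.range ![wX, wY] ∪ Set.range ![wDx, wDy]) = ⊤ := by
  have hpre : ((↑) : A2 → Module.End ℂ (MvPolynomial (Fin 2) ℂ)) ⁻¹' {Xop, Yop, Dxop, Dyop} =
      Set.range ![wX, wY] ∪ Set.range ![wDx, wDy] := by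
    ext a
    simp [Subtype.ext_iff, wX, wY, wDx, wDy, or_comm, or_left_comm, eq_comm]
  rw [← hpre]
  exact Algebra.adjoin_adjoin_coe_preimage

end WeylAlgebra

section LinearForms

variable {ι K R : Type*}

theorem exists_prod_smul_add_eq [CommSemiring K] [Semiring R] [Algebra K R] {x y : R}
    (hxy : Commute x y) (z : ι → K) (l : List ι) :
    ∃ a, (l.map fun j => z j • x + y).prod = y ^ l.length + a * x := by
  induction l with
  | nil => exact ⟨0, by simp⟩
  | cons j l ih =>
    obtain ⟨a, ha⟩ := ih
    refine ⟨z j • y ^ l.length + (z j • x + y) * a, ?_⟩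
    rw [List.map_cons, List.prod_cons, ha, List.length_cons, pow_succ', mul_add, add_mul,
      smul_mul_assoc, (hxy.pow_right _).eq, add_mul _ _ x, smul_mul_assoc, mul_assoc _ a]
    abel

theorem length_filter_ne_add_one_of_nodup_s16 [DecidableEq ι] {l : List ι} (hl : l.Nodup) {i : ι}
    (hi : i ∈ l) : (l.filter (· ≠ i)).length + 1 = l.length := by
  rw [← List.length_erase_add_one hi, hl.erase_eq_filter]
  simp only [bne, beq_eq_decide, decide_not]

variable [Field K] [Ring R] [Algebra K R] {x p : Fin 2 → R}

theorem IsWeylPair.exists_prod_mul_sub_sum_eq [DecidableEq ι] (h : IsWeylPair x p) (z β : ι → K)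
    {l : List ι} (hl : l.Nodup) {n : ℕ} (hn : l.length = n + 1) :
    ∃ a, (l.map fun j => z j • x 0 + x 1).prod * p 1 -
        ∑ i ∈ l.toFinset, β i • ((l.filter (· ≠ i)).map fun j => z j • x 0 + x 1).prod =
      x 1 ^ n * (x 1 * p 1 - algebraMap K R (∑ i ∈ l.toFinset, β i)) + a * x 0 := by
  have hx := h.commute_x 0 1
  obtain ⟨a, ha⟩ := exists_prod_smul_add_eq hx z l
  choose b hb using fun i => exists_prod_smul_add_eq hx z (l.filter (· ≠ i))
  have hterm (i) (hi : i ∈ l.toFinset) :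
      β i • ((l.filter (· ≠ i)).map fun j => z j • x 0 + x 1).prod =
        β i • x 1 ^ n + (β i • b i) * x 0 := by
    have hlen := length_filter_ne_add_one_of_nodup_s16 hl (List.mem_toFinset.1 hi)
    rw [hb, Nat.add_right_cancel (hlen.trans hn), smul_add, smul_mul_assoc]
  refine ⟨a * p 1 - ∑ i ∈ l.toFinset, β i • b i, ?_⟩
  rw [ha, hn, Finset.sum_congr rfl hterm, Finset.sum_add_distrib, ← Finset.sum_smul,
    ← Finset.sum_mul, Algebra.smul_def, Algebra.commutes, add_mul, mul_assoc a,
    ← (h.commute_p_x (by decide : (1 : Fin 2) ≠ 0)).eq, pow_succ]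
  noncomm_ring

theorem IsWeylPair.span_eq_eulerIdeal (h : IsWeylPair x p) (s : K) {b : K} (hb : b ≠ -1) (n : ℕ)
    (a : R) :
    Ideal.span {x 0, x 0 * p 0 + x 1 * p 1 - algebraMap K R s,
      x 1 ^ n * (x 1 * p 1 - algebraMap K R (s - b)) + a * x 0} = eulerIdeal x p 1 (s + 1) n := by
  have hP : x 0 * p 0 + x 1 * p 1 - algebraMap K R s =
      p 0 * x 0 + (x 1 * p 1 - algebraMap K R (s + 1)) := by
    rw [h.p_mul_x, map_add, map_one]
    abel
  have hQ : x 1 ^ n * (x 1 * p 1 - algebraMap K R (s - b)) =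
      x 1 ^ n * (x 1 * p 1 - algebraMap K R (s + 1)) + (b + 1) • x 1 ^ n := by
    rw [Algebra.smul_def, Algebra.commutes, ← mul_add, sub_add, ← map_sub, add_sub_add_right_eq_sub]
  refine eq_of_forall_ge_iff fun J => ?_
  have hne (j : Fin 2) : j ≠ 1 ↔ j = 0 := by omega
  simp only [eulerIdeal_le_iff, Ideal.span_le, Set.insert_subset_iff, Set.singleton_subset_iff,
    SetLike.mem_coe, hne, forall_eq, hP, hQ]
  refine and_congr_right fun hx => ?_
  rw [J.add_mem_iff_right (J.mul_mem_left _ hx), J.add_mem_iff_left (J.mul_mem_left a hx)]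
  refine and_congr_right fun hE => ?_
  rw [J.add_mem_iff_right (J.mul_mem_left _ hE),
    J.smul_mem_iff fun h0 => hb (eq_neg_of_add_eq_zero_left h0)]

end LinearForms

theorem mulForm_eq_smul_add (c : ℕ → ℂ) :
    mulForm c = fun j => (if j = 2 then 0 else c j) • wX + wY := by
  ext1 j
  by_cases hj : j = 2 <;> simp [mulForm, hj]

theorem toFinset_range'_succ (a n : ℕ) :
    (List.range' a (n + 1)).toFinset = Finset.Icc a (n + a) := by
  rw [List.toFinset_range'_1, add_comm a, add_right_comm, Finset.Ico_add_one_right_eq_Icc]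

theorem exists_lt_add_one_eq_neg_iff {K : Type*} [CommRing K] {s : K} {n : ℕ} :
    (∃ k < n, s + 1 = -((k : K) + 1)) ↔ ∃ z : ℤ, s = z ∧ -(n : ℤ) ≤ z + 1 ∧ z + 1 ≤ -1 := by
  constructor
  · rintro ⟨k, hk, hs⟩
    refine ⟨-(k + 2), ?_, by omega, by omega⟩
    push_cast
    linear_combination hs
  · rintro ⟨z, rfl, hz, hz'⟩
    obtain ⟨k, rfl⟩ : ∃ k : ℕ, z = -(k + 2) := ⟨(-z - 2).toNat, by omega⟩
    refine ⟨k, by omega, ?_⟩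
    push_cast
    ring

theorem stmt16_general (m : ℕ) (hm : 2 ≤ m) (c : ℕ → ℂ) (tβ : ℕ → ℂ) (htβ : tβ 1 ≠ -1)
    (P Q : A2)
    (hP : P = wX * wDx + wY * wDy - algebraMap ℂ A2 (∑ i ∈ Finset.Icc 1 m, tβ i))
    (hQ : Q = ((List.range' 2 (m - 1)).map (mulForm c)).prod * wDy -
      ∑ i ∈ Finset.Icc 2 m, tβ i • (((List.range' 2 (m - 1)).filter (· ≠ i)).map (mulForm c)).prod)
    (I : Ideal A2) (hI : I = Ideal.span {wX, P, Q}) :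
    (I ≠ ⊤ ↔ ∃ z : ℤ, (∑ i ∈ Finset.Icc 1 m, tβ i) = (z : ℂ) ∧
        -((m : ℤ) - 2) ≤ z + 1 ∧ z + 1 ≤ -1) ∧
      (I ≠ ⊤ → I.IsMaximal) := by
  obtain ⟨n, rfl⟩ := Nat.exists_eq_add_of_le' hm
  have hsum : ∑ i ∈ Finset.Icc 2 (n + 2), tβ i = ∑ i ∈ Finset.Icc 1 (n + 2), tβ i - tβ 1 := by
    rw [← Finset.add_sum_Ioc_eq_sum_Icc (by omega : 1 ≤ n + 2), add_sub_cancel_left]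
    rfl
  have hIeuler :
      I = eulerIdeal ![wX, wY] ![wDx, wDy] 1 (∑ i ∈ Finset.Icc 1 (n + 2), tβ i + 1) n := by
    obtain ⟨a, ha⟩ := isWeylPair_A2.exists_prod_mul_sub_sum_eq
      (fun j => if j = 2 then 0 else c j) tβ (List.nodup_range' (s := 2) 1)
      List.length_range'
    rw [toFinset_range'_succ, hsum] at ha
    rw [hI, hP, hQ, mulForm_eq_smul_add, ← isWeylPair_A2.span_eq_eulerIdeal _ htβ n a, ← ha]
    rfl
  rw [hIeuler]
  refine ⟨?_, isWeylPair_A2.isMaximal_eulerIdeal_of_ne_top adjoin_generators_A2_eq_top⟩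
  rw [isWeylPair_A2.eulerIdeal_ne_top_iff adjoin_generators_A2_eq_top, exists_lt_add_one_eq_neg_iff]
  push_cast
  rw [add_sub_cancel_right]

/-- with `α₂ = y`, `αⱼ = cⱼx + y` (`3 ≤ j ≤ m`, the `cⱼ` pairwise distinct and
nonzero), `β̃ ∈ ℂ^m` with no `β̃ᵢ` an integer, `P = X∂x + Y∂y − |β̃|` and
`Q = (Π_{j=2}^m Aⱼ)∂y − Σ_{i=2}^m β̃ᵢ Π_{j=2,j≠i}^m Aⱼ`, the left ideal
`I = A₂X + A₂P + A₂Q` is proper iff `−(m−2) ≤ |β̃|+1 ≤ −1` (as an integer), and in that case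
it is a maximal left ideal (so `A₂/I` is a nonzero simple `A₂`-module). -/
theorem stmt16 (m : ℕ) (hm : 2 ≤ m) (c : ℕ → ℂ)
    (hc0 : ∀ j, 3 ≤ j → j ≤ m → c j ≠ 0)
    (hcne : ∀ j j', 3 ≤ j → j ≤ m → 3 ≤ j' → j' ≤ m → j ≠ j' → c j ≠ c j')
    (tβ : ℕ → ℂ) (htβ : ∀ i, 1 ≤ i → i ≤ m → ∀ z : ℤ, tβ i ≠ z)
    (P Q : A2)
    (hP : P = wX * wDx + wY * wDy - algebraMap ℂ A2 (∑ i ∈ Finset.Icc 1 m, tβ i))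
    (hQ : Q = ((List.range' 2 (m - 1)).map (mulForm c)).prod * wDy -
      ∑ i ∈ Finset.Icc 2 m, tβ i • (((List.range' 2 (m - 1)).filter (· ≠ i)).map (mulForm c)).prod)
    (I : Ideal A2) (hI : I = Ideal.span {wX, P, Q}) :
    (I ≠ ⊤ ↔ ∃ z : ℤ, (∑ i ∈ Finset.Icc 1 m, tβ i) = (z : ℂ) ∧
        -((m : ℤ) - 2) ≤ z + 1 ∧ z + 1 ≤ -1) ∧
      (I ≠ ⊤ → I.IsMaximal) :=
  stmt16_general m hm c tβ (by simpa using htβ 1 le_rfl (by omega) (-1)) P Q hP hQ I hI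
end
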